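/- arXiv:1410.3333 — 2 statements merged into one kernel-verified Lean document; each statement's English description precedes it below -/
import Mathlib

section
/- There exists a constant C (depending only on f) such that for all x ≥ 2, |∑_{p ≤ x, p prime} ν₁(p)·log p/(p − 1) − log x| ≤ C. -/
open Polynomial

/-- ν₁(d) = #{a mod d : gcd(a,d) = 1 and f(a) ≡ 0 (mod d)} -/
def nu1 (f : Polynomial ℤ) (d : ℕ) : ℕ :=
  ((Finset.range d).filter (fun a : ℕ => Nat.gcd a d = 1 ∧ (d : ℤ) ∣ f.eval (a : ℤ))).card

/-!
Let `K = ℚ(α)` with `f(α) = 0`. By Kummer-Dedekind the roots of `f` modulo `p` correspond, for all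
but finitely many `p`, to the prime ideals of norm `p`, and replacing `p - 1` by `p` changes the sum
by `O(1)`. It remains to prove Mertens' first theorem for the prime ideals of `𝓞 K`, and this
imitates the classical argument with the factorial replaced by the product of the norms of the
nonzero integers whose coordinates in an integral basis lie in `[-R, R]`.

On the one hand every archimedean embedding has average size `log R` on such a box in logarithmic
scale, so the average of `log |N a|` is `n log R + O(1)`. On the other hand
`log |N a| = ∑ log N P` over the prime powers `P ^ k` containing `a`, and `P ^ k` contains a
proportion of about `1 / N P ^ k` of the box, because an ideal of norm `m` has covering radius
`O(m ^ (1 / n))`. Hence `∑ log N P / N P = n log R + O(1)` over `N P ≤ (B R) ^ n`; neither the class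
group nor the units enter.
-/

namespace PrimeIdealMertens

open Module NumberField

theorem pow_sub_pow_le {x y : ℝ} (hy : 0 ≤ y) (hyx : y ≤ x) (n : ℕ) :
    x ^ n - y ^ n ≤ (x - y) * n * x ^ (n - 1) := by
  have h := abs_pow_sub_pow_le x y n
  rw [abs_of_nonneg (sub_nonneg.mpr hyx), abs_of_nonneg (hy.trans hyx), abs_of_nonneg hy,
    max_eq_left hyx] at h
  exact (le_abs_self _).trans h

section LatticeBox

variable {ι M : Type*} [Fintype ι] [AddCommGroup M] (b : Basis ι ℤ M)

open Classical in
/-- The elements of a lattice with basis `b` all of whose coordinates lie in `[-R, R]`. Averages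
over these boxes replace the class group and the unit group. -/
noncomputable def latticeBox (R : ℕ) : Finset M :=
  (Fintype.piFinset fun _ : ι => Finset.Icc (-(R : ℤ)) R).map
    b.equivFun.symm.toEquiv.toEmbedding

variable {b} in
theorem mem_latticeBox {R : ℕ} {a : M} : a ∈ latticeBox b R ↔ ∀ i, |b.repr a i| ≤ R := by
  simp [latticeBox, Finset.mem_map_equiv, abs_le]

theorem card_latticeBox (R : ℕ) : (latticeBox b R).card = (2 * R + 1) ^ Fintype.card ι := by
  have h : (R + 1 + R : ℤ).toNat = 2 * R + 1 := by omega
  simp [latticeBox, h]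

theorem zero_mem_latticeBox (R : ℕ) : (0 : M) ∈ latticeBox b R := by
  simp [mem_latticeBox]

variable {b} in
theorem neg_mem_latticeBox {R : ℕ} {a : M} (ha : a ∈ latticeBox b R) : -a ∈ latticeBox b R := by
  simpa [mem_latticeBox] using ha

variable {b} in
theorem add_mem_latticeBox {R S : ℕ} {x y : M} (hx : x ∈ latticeBox b R)
    (hy : y ∈ latticeBox b S) : x + y ∈ latticeBox b (R + S) := by
  rw [mem_latticeBox] at *
  intro i
  rw [map_add, Finsupp.add_apply]
  push_cast
  exact (abs_add_le _ _).trans (add_le_add (hx i) (hy i))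

theorem exists_ne_zero_mem_latticeBox {H : AddSubgroup M} {m : ℕ} (hH : H.index ≠ 0)
    (hm : H.index < (m + 1) ^ Fintype.card ι) : ∃ a ∈ H, a ≠ 0 ∧ a ∈ latticeBox b m := by
  classical
  have : H.FiniteIndex := ⟨hH⟩
  have := Fintype.ofFinite (M ⧸ H)
  set s : Finset M := (Fintype.piFinset fun _ : ι => Finset.Icc (0 : ℤ) m).map
    b.equivFun.symm.toEquiv.toEmbedding
  have hs : ∀ x ∈ s, ∀ i, 0 ≤ b.repr x i ∧ b.repr x i ≤ m := by
    simp [s, Finset.mem_map_equiv]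
  have hcard : (Finset.univ : Finset (M ⧸ H)).card < s.card := by
    rw [Finset.card_univ, ← Nat.card_eq_fintype_card, ← AddSubgroup.index]
    refine hm.trans_eq ?_
    simp [s]
  obtain ⟨x, hx, y, hy, hne, hxy⟩ := Finset.exists_ne_map_eq_of_card_lt_of_maps_to hcard
    (f := ((↑) : M → M ⧸ H)) (fun _ _ => Finset.mem_univ _)
  refine ⟨-x + y, QuotientAddGroup.eq.mp hxy, neg_add_eq_zero.not.mpr hne,
    mem_latticeBox.mpr fun i => ?_⟩
  rw [map_add, map_neg, Finsupp.add_apply, Finsupp.neg_apply, abs_le]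
  constructor <;> linarith [hs x hx i, hs y hy i]

open Classical in
/-- The points of the subgroup `H` lying in the box of radius `R`. -/
noncomputable def pointsInBox (H : AddSubgroup M) (R : ℕ) : Finset M :=
  (latticeBox b R).filter (· ∈ H)

variable {b} in
theorem mem_pointsInBox {H : AddSubgroup M} {R : ℕ} {a : M} :
    a ∈ pointsInBox b H R ↔ a ∈ latticeBox b R ∧ a ∈ H := by
  simp [pointsInBox]

theorem card_pointsInBox_pos (H : AddSubgroup M) (R : ℕ) : 1 ≤ (pointsInBox b H R).card :=
  Finset.card_pos.mpr ⟨0, mem_pointsInBox.mpr ⟨zero_mem_latticeBox b R, zero_mem H⟩⟩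

/-- `D` is at least the covering radius of the subgroup `H` for the sup norm of coordinates. -/
def IsCoveringRadius (H : AddSubgroup M) (D : ℕ) : Prop :=
  ∀ t : M, ∃ v ∈ latticeBox b D, t - v ∈ H

variable {b} {H : AddSubgroup M} {D : ℕ}

theorem IsCoveringRadius.exists_section (hD : IsCoveringRadius b H D) :
    ∃ v : M ⧸ H → M, (∀ q, v q ∈ latticeBox b D) ∧ ∀ q, (v q : M ⧸ H) = q := by
  have (q : M ⧸ H) : ∃ v ∈ latticeBox b D, (v : M ⧸ H) = q := by
    obtain ⟨t, rfl⟩ := QuotientAddGroup.mk_surjective q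
    obtain ⟨v, hv, htv⟩ := hD t
    exact ⟨v, hv, QuotientAddGroup.eq.mpr (by rwa [neg_add_eq_sub])⟩
  choose v hv hvq using this
  exact ⟨v, hv, hvq⟩

theorem IsCoveringRadius.finiteIndex (hD : IsCoveringRadius b H D) : H.FiniteIndex := by
  obtain ⟨v, hv, hvq⟩ := hD.exists_section
  have : Finite (M ⧸ H) := Finite.of_injective (fun q => (⟨v q, hv q⟩ : latticeBox b D))
    fun q q' h => by rw [← hvq q, ← hvq q', Subtype.mk.inj h]
  exact H.finiteIndex_of_finite_quotient

theorem IsCoveringRadius.index_mul_card_le (hD : IsCoveringRadius b H D) (R : ℕ) :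
    H.index * (pointsInBox b H R).card ≤ (2 * (R + D) + 1) ^ Fintype.card ι := by
  have := hD.finiteIndex
  have := Fintype.ofFinite (M ⧸ H)
  obtain ⟨v, hv, hvq⟩ := hD.exists_section
  rw [AddSubgroup.index, Nat.card_eq_fintype_card, ← Finset.card_univ, ← card_latticeBox b,
    ← Finset.card_product]
  refine Finset.card_le_card_of_injOn (fun z => z.2 + v z.1) ?_ ?_
  · rintro ⟨q, a⟩ hz
    rw [Finset.mem_coe, Finset.mem_product, mem_pointsInBox] at hz
    exact add_mem_latticeBox hz.2.1 (hv q)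
  · rintro ⟨q, a⟩ hz ⟨q', a'⟩ hz' (h : a + v q = a' + v q')
    rw [Finset.mem_coe, Finset.mem_product, mem_pointsInBox] at hz hz'
    have hq := congrArg ((↑) : M → M ⧸ H) h
    rw [QuotientAddGroup.mk_add, QuotientAddGroup.mk_add, hvq, hvq,
      (QuotientAddGroup.eq_zero_iff _).mpr hz.2.2, (QuotientAddGroup.eq_zero_iff _).mpr hz'.2.2,
      zero_add, zero_add] at hq
    subst hq
    simpa using h

theorem IsCoveringRadius.le_index_mul_card (hD : IsCoveringRadius b H D) (R : ℕ) :
    (2 * R + 1) ^ Fintype.card ι ≤ H.index * (pointsInBox b H (R + D)).card := by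
  have := hD.finiteIndex
  have := Fintype.ofFinite (M ⧸ H)
  obtain ⟨v, hv, hvq⟩ := hD.exists_section
  rw [← card_latticeBox b, AddSubgroup.index, Nat.card_eq_fintype_card, ← Finset.card_univ,
    ← Finset.card_product]
  refine Finset.card_le_card_of_injOn (fun x => ((x : M ⧸ H), x + -v x)) ?_ ?_
  · intro x hx
    rw [Finset.mem_coe, Finset.mem_product, mem_pointsInBox]
    refine ⟨Finset.mem_univ _, add_mem_latticeBox hx (neg_mem_latticeBox (hv _)), ?_⟩
    rw [← QuotientAddGroup.eq_zero_iff, QuotientAddGroup.mk_add, QuotientAddGroup.mk_neg, hvq,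
      add_neg_cancel]
  · intro x _ y _ h
    rw [Prod.mk.injEq] at h
    simpa [h.1] using h.2

theorem IsCoveringRadius.index_mul_card_le_add (hD : IsCoveringRadius b H D) (R : ℕ) :
    (H.index * (pointsInBox b H R).card : ℝ) ≤ (2 * R + 1) ^ Fintype.card ι +
      2 * Fintype.card ι * D * (2 * R + 1 + 2 * D) ^ (Fintype.card ι - 1) := by
  have h : (H.index * (pointsInBox b H R).card : ℝ) ≤
      ((2 * (R + D) + 1 : ℕ) : ℝ) ^ Fintype.card ι := by
    exact_mod_cast hD.index_mul_card_le R
  have hbase : ((2 * (R + D) + 1 : ℕ) : ℝ) = 2 * R + 1 + 2 * D := by push_cast; ring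
  rw [hbase] at h
  have hpow := pow_sub_pow_le (x := 2 * R + 1 + 2 * D) (y := 2 * (R : ℝ) + 1) (by positivity)
    (le_add_of_nonneg_right (by positivity)) (Fintype.card ι)
  linarith

theorem IsCoveringRadius.sub_le_index_mul_card [Nonempty ι] (hD : IsCoveringRadius b H D)
    (R : ℕ) :
    (2 * R + 1) ^ Fintype.card ι - 2 * Fintype.card ι * D * (2 * R + 1) ^ (Fintype.card ι - 1) ≤
      (H.index * (pointsInBox b H R).card : ℝ) := by
  set n := Fintype.card ι
  set w : ℝ := 2 * R + 1
  rcases le_or_gt D R with hDR | hDR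
  · have hDR' : (D : ℝ) ≤ R := by exact_mod_cast hDR
    have h : ((2 * (R - D : ℕ) + 1 : ℕ) : ℝ) ^ n ≤ H.index * (pointsInBox b H R).card := by
      have := hD.le_index_mul_card (R - D)
      rw [Nat.sub_add_cancel hDR] at this
      exact_mod_cast this
    have hbase : ((2 * (R - D : ℕ) + 1 : ℕ) : ℝ) = w - 2 * D := by
      push_cast [Nat.cast_sub hDR]
      ring
    rw [hbase] at h
    have hpow := pow_sub_pow_le (x := w) (y := w - 2 * D) (by linarith) (by simp) n
    linarith
  · have hwD : w ≤ 2 * n * D := by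
      have h1 : (R : ℝ) + 1 ≤ D := by exact_mod_cast hDR
      have h2 : (1 : ℝ) ≤ n := by exact_mod_cast Fintype.card_pos (α := ι)
      nlinarith
    have hpow : w ^ n ≤ 2 * n * D * w ^ (n - 1) := by
      rw [← mul_pow_sub_one Fintype.card_ne_zero w]
      gcongr
    have hcount : (0 : ℝ) ≤ H.index * (pointsInBox b H R).card := by positivity
    linarith

theorem IsCoveringRadius.abs_index_mul_card_sub_le [Nonempty ι] (hD : IsCoveringRadius b H D)
    (R : ℕ) :
    |(H.index * (pointsInBox b H R).card : ℝ) - (2 * R + 1) ^ Fintype.card ι| ≤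
      2 * Fintype.card ι * D * (2 * R + 1 + 2 * D) ^ (Fintype.card ι - 1) := by
  have h : (2 * R + 1 : ℝ) ^ (Fintype.card ι - 1) ≤
      (2 * R + 1 + 2 * D) ^ (Fintype.card ι - 1) :=
    pow_le_pow_left₀ (by positivity) (le_add_of_nonneg_right (by positivity)) _
  have h' := mul_le_mul_of_nonneg_left h (by positivity : (0 : ℝ) ≤ 2 * Fintype.card ι * D)
  rw [abs_le]
  constructor <;> linarith [hD.index_mul_card_le_add R, hD.sub_le_index_mul_card R]

end LatticeBox

theorem sum_log_div_le (R : ℕ) :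
    ∑ j ∈ Finset.range R, Real.log (R / ((j + 1 : ℕ) : ℝ)) ≤ R := by
  rcases Nat.eq_zero_or_pos R with rfl | hR
  · simp
  rw [← Real.log_prod fun j _ => by positivity, Finset.prod_div_distrib, Finset.prod_const,
    Finset.card_range, ← Nat.cast_prod, Finset.prod_range_add_one_eq_factorial,
    Real.log_le_iff_le_exp (by positivity)]
  exact Real.pow_div_factorial_le_exp _ (by positivity) R

theorem sum_posLog_div_le (R : ℕ) (T : Finset ℤ) :
    ∑ j ∈ T, Real.posLog (R / j) ≤ 2 * R := by
  have hsupport : ∀ j ∉ Finset.Icc (-(R : ℤ)) R, Real.posLog (R / j : ℝ) = 0 := by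
    intro j hj
    have hRj : (R : ℤ) < |j| := by
      rwa [Finset.mem_Icc, ← abs_le, not_le] at hj
    rw [Real.posLog_eq_zero_iff, abs_div, Nat.abs_cast]
    exact div_le_one_of_le₀ (by exact_mod_cast hRj.le) (abs_nonneg _)
  have hlog : ∀ j ∈ Finset.range R, Real.posLog (R / ((j + 1 : ℕ) : ℤ) : ℝ) =
      Real.log (R / ((j + 1 : ℕ) : ℝ)) := by
    intro j hj
    have hj : (j + 1 : ℕ) ≤ R := Finset.mem_range.mp hj
    rw [Int.cast_natCast, Real.posLog_eq_log]
    rw [abs_of_nonneg (by positivity), one_le_div (by positivity)]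
    exact_mod_cast hj
  calc ∑ j ∈ T, Real.posLog (R / j)
      ≤ ∑ j ∈ Finset.Icc (-(R : ℤ)) R, Real.posLog (R / j : ℝ) := by
        rw [← Finset.sum_filter_add_sum_filter_not T (· ∈ Finset.Icc (-(R : ℤ)) R),
          Finset.sum_eq_zero fun j hj => hsupport j (Finset.mem_filter.mp hj).2, add_zero]
        exact Finset.sum_le_sum_of_subset_of_nonneg
          (fun j hj => (Finset.mem_filter.mp hj).2) fun _ _ _ => Real.posLog_nonneg
    _ = 2 * ∑ j ∈ Finset.range R, Real.log (R / ((j + 1 : ℕ) : ℝ)) := by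
        rw [Finset.sum_Icc_of_even_eq_range (fun j => by simp [div_neg]),
          Finset.sum_range_succ', Finset.sum_congr rfl hlog]
        simp
    _ ≤ 2 * R := by gcongr; exact sum_log_div_le R

theorem abs_intCast_sub_round_le (m : ℤ) (x : ℝ) : |(m : ℝ) - round x| ≤ 2 * |m - x| :=
  calc |(m : ℝ) - round x| ≤ |m - x| + |x - round x| := abs_sub_le _ _ _
    _ ≤ |m - x| + |x - m| := add_le_add_right (round_le x m) _
    _ = 2 * |m - x| := by rw [abs_sub_comm x, two_mul]

theorem map_eq_sum_repr {ι M : Type*} [Fintype ι] [AddCommGroup M] {b : Basis ι ℤ M}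
    (φ : M →+ ℂ) (a : M) : φ a = ∑ i, (b.repr a i : ℂ) * φ (b i) := by
  conv_lhs => rw [← b.sum_repr a, map_sum]
  simp only [map_zsmul, zsmul_eq_mul]

theorem exists_mul_abs_repr_sub_le_norm {ι M : Type*} [Finite ι] [AddCommGroup M]
    {b : Basis ι ℤ M} {i : ι} (φ : M →+ ℂ) (hi : φ (b i) ≠ 0) :
    ∃ c > 0, ∃ k : (ι → ℤ) → ℤ, DependsOn k {i}ᶜ ∧
      ∀ a, c * |((b.repr a i - k (b.repr a) : ℤ) : ℝ)| ≤ ‖φ a‖ := by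
  classical
  have := Fintype.ofFinite ι
  set u := φ (b i)
  have hu : 0 < ‖u‖ := norm_pos_iff.mpr hi
  let β : (ι → ℤ) → ℝ := fun x => -(∑ j ∈ Finset.univ.erase i, (x j : ℂ) * φ (b j) / u).re
  have hβ : DependsOn β {i}ᶜ := by
    intro x y hxy
    refine congrArg (-Complex.re ·) (Finset.sum_congr rfl fun j hj => ?_)
    rw [hxy j (Finset.ne_of_mem_erase hj)]
  have hφ : ∀ a, ‖u‖ * |b.repr a i - β (b.repr a)| ≤ ‖φ a‖ := by
    intro a
    have h : φ a = u * (b.repr a i +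
        ∑ j ∈ Finset.univ.erase i, (b.repr a j : ℂ) * φ (b j) / u) := by
      rw [map_eq_sum_repr (b := b), ← Finset.add_sum_erase _ _ (Finset.mem_univ i), mul_add,
        Finset.mul_sum, mul_comm]
      exact congrArg _ (Finset.sum_congr rfl fun j _ => (mul_div_cancel₀ _ hi).symm)
    rw [h, norm_mul]
    refine mul_le_mul_of_nonneg_left ((Complex.abs_re_le_norm _).trans_eq' ?_) hu.le
    simp only [β, sub_neg_eq_add, Complex.add_re, Complex.intCast_re]
  refine ⟨‖u‖ / 2, half_pos hu, fun x => round (β x), fun x y hxy => congrArg round (hβ hxy),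
    fun a => (hφ a).trans' ?_⟩
  have hround := abs_intCast_sub_round_le (b.repr a i) (β (b.repr a))
  push_cast
  linarith [mul_le_mul_of_nonneg_left hround hu.le]

section LinearFormOnBox

variable {ι M : Type*} [Fintype ι] [AddCommGroup M] {b : Basis ι ℤ M} {i : ι}

theorem card_filter_repr_sub_eq_le {k : (ι → ℤ) → ℤ} (hk : DependsOn k {i}ᶜ) (R : ℕ) (c : ℤ) :
    ((latticeBox b R).filter fun a => b.repr a i - k (b.repr a) = c).card ≤
      (2 * R + 1) ^ (Fintype.card ι - 1) := by
  classical
  have hcard : (Fintype.piFinset fun _ : {j // j ≠ i} => Finset.Icc (-(R : ℤ)) R).card =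
      (2 * R + 1) ^ (Fintype.card ι - 1) := by
    have h : (R + 1 + R : ℤ).toNat = 2 * R + 1 := by omega
    simp [h]
  rw [← hcard]
  refine Finset.card_le_card_of_injOn (fun a (j : {j // j ≠ i}) => b.repr a j) ?_ ?_
  · intro a ha
    have ha := mem_latticeBox.mp (Finset.mem_filter.mp ha).1
    rw [Finset.mem_coe, Fintype.mem_piFinset]
    exact fun j => Finset.mem_Icc.mpr (abs_le.mp (ha j))
  · intro a ha a' ha' haa'
    have hj : ∀ j ≠ i, b.repr a j = b.repr a' j := fun j hj => congrFun haa' ⟨j, hj⟩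
    have h1 := (Finset.mem_filter.mp ha).2
    have h2 := (Finset.mem_filter.mp ha').2
    have h3 : k (b.repr a) = k (b.repr a') := hk hj
    refine b.repr.injective (Finsupp.ext fun j => ?_)
    by_cases hji : j = i
    · subst hji
      linarith
    · exact hj j hji

theorem sum_comp_repr_sub_le {k : (ι → ℤ) → ℤ} (hk : DependsOn k {i}ᶜ) {g : ℤ → ℝ}
    (hg : ∀ j, 0 ≤ g j) {S : ℝ} (hS : ∀ T : Finset ℤ, ∑ j ∈ T, g j ≤ S) (R : ℕ) :
    ∑ a ∈ latticeBox b R, g (b.repr a i - k (b.repr a)) ≤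
      (2 * R + 1) ^ (Fintype.card ι - 1) * S := by
  classical
  rw [Finset.sum_comp g fun a => b.repr a i - k (b.repr a)]
  calc _ ≤ ∑ j ∈ (latticeBox b R).image fun a => b.repr a i - k (b.repr a),
        (2 * R + 1 : ℝ) ^ (Fintype.card ι - 1) * g j := by
        refine Finset.sum_le_sum fun j _ => ?_
        rw [nsmul_eq_mul]
        refine mul_le_mul_of_nonneg_right ?_ (hg j)
        exact_mod_cast card_filter_repr_sub_eq_le hk R j
    _ ≤ _ := by
        rw [← Finset.mul_sum]
        exact mul_le_mul_of_nonneg_left (hS _) (by positivity)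

theorem norm_map_le_of_mem_latticeBox (φ : M →+ ℂ) {R : ℕ} {a : M} (ha : a ∈ latticeBox b R) :
    ‖φ a‖ ≤ (∑ i, ‖φ (b i)‖) * R := by
  rw [map_eq_sum_repr (b := b), Finset.sum_mul]
  refine norm_sum_le_of_le _ fun i _ => ?_
  rw [norm_mul, mul_comm, Complex.norm_intCast]
  refine mul_le_mul_of_nonneg_left ?_ (norm_nonneg _)
  exact_mod_cast mem_latticeBox.mp ha i

theorem log_sub_le_log {c : ℝ} (hc : 0 < c) {R : ℕ} (hR : 1 ≤ R) {j : ℤ} {y A : ℝ}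
    (hy : c * |(j : ℝ)| ≤ y) (hyA : -(A * R) ≤ Real.log y) :
    Real.log R - |Real.log c| - (Real.posLog (R / j) + if j = 0 then (A + 1) * R else 0) ≤
      Real.log y := by
  split_ifs with hj
  · have hlogR := Real.log_le_self (show (0 : ℝ) ≤ R by positivity)
    rw [hj, Int.cast_zero, div_zero, Real.posLog_zero]
    linarith [abs_nonneg (Real.log c)]
  · have hj' : (j : ℝ) ≠ 0 := by exact_mod_cast hj
    have hlog := Real.log_le_log (by positivity) hy
    rw [Real.log_mul hc.ne' (abs_ne_zero.mpr hj'), Real.log_abs] at hlog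
    have hposLog : Real.log (R / j) ≤ Real.posLog (R / j) := le_max_right _ _
    rw [Real.log_div (by positivity) hj'] at hposLog
    linarith [neg_abs_le (Real.log c)]

theorem exists_mul_log_sub_le_sum_log_norm (φ : M →+ ℂ) (hi : φ (b i) ≠ 0) {A : ℝ}
    (hφ : ∀ R : ℕ, ∀ a ∈ latticeBox b R, -(A * R) ≤ Real.log ‖φ a‖) :
    ∃ C : ℝ, ∀ R : ℕ, 1 ≤ R → (2 * R + 1) ^ Fintype.card ι * (Real.log R - C) ≤
      ∑ a ∈ latticeBox b R, Real.log ‖φ a‖ := by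
  have hA : 0 ≤ A := by simpa using hφ 1 0 (zero_mem_latticeBox b 1)
  obtain ⟨c, hc, k, hk, hck⟩ := exists_mul_abs_repr_sub_le_norm φ hi
  refine ⟨|Real.log c| + (A + 3), fun R hR => ?_⟩
  set g : ℤ → ℝ := fun j => Real.posLog (R / j) + if j = 0 then (A + 1) * R else 0
  have hg : ∀ j, 0 ≤ g j := fun j =>
    add_nonneg Real.posLog_nonneg (by split_ifs <;> positivity)
  have hgsum : ∀ T : Finset ℤ, ∑ j ∈ T, g j ≤ (A + 3) * R := by
    intro T
    have hzero : (∑ j ∈ T, if j = 0 then (A + 1) * R else 0) ≤ (A + 1) * R := by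
      rw [Finset.sum_ite_eq']
      split_ifs
      · exact le_rfl
      · positivity
    rw [Finset.sum_add_distrib]
    linarith [sum_posLog_div_le R T]
  have hfibre : ∑ a ∈ latticeBox b R, g (b.repr a i - k (b.repr a)) ≤
      (2 * R + 1) ^ Fintype.card ι * (A + 3) := by
    have : Nonempty ι := ⟨i⟩
    refine (sum_comp_repr_sub_le hk hg hgsum R).trans ?_
    rw [← pow_sub_one_mul (M := ℝ) Fintype.card_ne_zero, mul_assoc, mul_comm (A + 3)]
    gcongr
    linarith [(Nat.cast_nonneg R : (0 : ℝ) ≤ R)]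
  calc (2 * R + 1) ^ Fintype.card ι * (Real.log R - (|Real.log c| + (A + 3)))
      ≤ ∑ a ∈ latticeBox b R, (Real.log R - |Real.log c| - g (b.repr a i - k (b.repr a))) := by
        rw [Finset.sum_sub_distrib, Finset.sum_const, card_latticeBox, nsmul_eq_mul]
        push_cast
        linarith
    _ ≤ _ := Finset.sum_le_sum fun a ha => log_sub_le_log hc hR (hck a) (hφ R a ha)

end LinearFormOnBox

theorem exists_mul_mem_latticeBox {ι O : Type*} [Fintype ι] [CommRing O] (b : Basis ι ℤ O) :
    ∃ C : ℕ, ∀ (A B : ℕ), ∀ x ∈ latticeBox b A, ∀ y ∈ latticeBox b B,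
      x * y ∈ latticeBox b (C * (A * B)) := by
  let S : ι → ℤ := fun i => ∑ j, ∑ k, |b.repr (b j * b k) i|
  have hS : ∀ i, 0 ≤ S i := fun i =>
    Finset.sum_nonneg fun j _ => Finset.sum_nonneg fun k _ => abs_nonneg _
  refine ⟨(∑ i, S i).toNat, fun A B x hx y hy => mem_latticeBox.mpr fun i => ?_⟩
  have hxy : x * y = ∑ j, ∑ k, (b.repr x j * b.repr y k) • (b j * b k) := by
    conv_lhs => rw [← b.sum_repr x, ← b.sum_repr y, Finset.sum_mul_sum]
    exact Finset.sum_congr rfl fun j _ => Finset.sum_congr rfl fun k _ => smul_mul_smul_comm ..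
  have hbound : |b.repr (x * y) i| ≤ S i * (A * B) := by
    simp only [hxy, S, map_sum, map_smul, Finsupp.coe_finsetSum, Finset.sum_apply,
      Finsupp.smul_apply, smul_eq_mul, Finset.sum_mul]
    refine Finset.abs_sum_le_sum_abs _ _ |>.trans (Finset.sum_le_sum fun j _ => ?_)
    refine Finset.abs_sum_le_sum_abs _ _ |>.trans (Finset.sum_le_sum fun k _ => ?_)
    rw [abs_mul, abs_mul, mul_comm]
    have hxj := mem_latticeBox.mp hx j
    have hyk := mem_latticeBox.mp hy k
    gcongr
  refine hbound.trans ?_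
  push_cast [Int.toNat_of_nonneg (Finset.sum_nonneg fun i _ => hS i)]
  gcongr
  exact Finset.single_le_sum (fun i _ => hS i) (Finset.mem_univ i)

section IdealPoints

variable {K ι : Type*} [Field K] [NumberField K] [Fintype ι] (b : Basis ι ℤ (𝓞 K))

include b in
theorem card_eq_finrank : Fintype.card ι = finrank ℚ K := by
  rw [← finrank_eq_card_basis b, RingOfIntegers.rank]

theorem absNorm_eq_index (I : Ideal (𝓞 K)) : I.absNorm = I.toAddSubgroup.index := rfl

theorem exists_mul_eq_natCast {a : 𝓞 K} (ha : a ≠ 0) : ∃ a' : 𝓞 K, ∃ k : ℕ, k ≠ 0 ∧ a * a' = k := by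
  obtain ⟨a', h⟩ := Ideal.mem_span_singleton'.mp (Ideal.absNorm_mem (Ideal.span {a}))
  refine ⟨a', _, ?_, (mul_comm a a').trans h⟩
  rwa [Ne, Ideal.absNorm_eq_zero_iff, Ideal.span_singleton_eq_bot]

theorem exists_isCoveringRadius : ∃ C : ℕ, ∀ (I : Ideal (𝓞 K)) (m : ℕ), I ≠ ⊥ →
    I.absNorm < (m + 1) ^ finrank ℚ K → IsCoveringRadius b I.toAddSubgroup (C * m) := by
  obtain ⟨C, hC⟩ := exists_mul_mem_latticeBox b
  refine ⟨C, fun I m hI hm t => ?_⟩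
  rw [← card_eq_finrank b, absNorm_eq_index] at hm
  obtain ⟨a, haI, ha0, ha⟩ := exists_ne_zero_mem_latticeBox b
    (Ideal.absNorm_eq_zero_iff.not.mpr hI) hm
  obtain ⟨a', k, hk, haa'⟩ := exists_mul_eq_natCast ha0
  -- Divide `t * a'` by `k` coordinatewise: the quotient approximates `t / a`.
  set q := b.equivFun.symm fun i => b.repr (t * a') i / k
  have hq : ∀ i, b.repr q i = b.repr (t * a') i / k :=
    congrFun (b.equivFun.apply_symm_apply _)
  have hk' : (0 : ℤ) < k := by exact_mod_cast Nat.pos_of_ne_zero hk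
  have hr : t * a' - k • q ∈ latticeBox b k := by
    refine mem_latticeBox.mpr fun i => ?_
    rw [map_sub, map_nsmul, Finsupp.sub_apply, Finsupp.smul_apply, hq, nsmul_eq_mul,
      ← Int.emod_def, abs_of_nonneg (Int.emod_nonneg _ hk'.ne')]
    exact (Int.emod_lt_of_pos _ hk').le
  have hmul : a * (t * a' - k • q) = k • (t - q * a) := by
    rw [nsmul_eq_mul, nsmul_eq_mul, ← haa']
    ring
  refine ⟨t - q * a, mem_latticeBox.mpr fun i => ?_, ?_⟩
  · have h := mem_latticeBox.mp (hC m k a ha _ hr) i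
    rw [hmul, map_nsmul, Finsupp.smul_apply, nsmul_eq_mul, abs_mul, abs_of_pos hk'] at h
    push_cast at h ⊢
    exact le_of_mul_le_mul_left (by linarith) hk'
  · rw [sub_sub_cancel]
    exact I.mul_mem_left q haI

theorem exists_isCoveringRadius_le_rpow : ∃ C : ℝ, 0 ≤ C ∧ ∀ I : Ideal (𝓞 K), I ≠ ⊥ →
    ∃ D : ℕ, IsCoveringRadius b I.toAddSubgroup D ∧
      D ≤ C * (I.absNorm : ℝ) ^ (1 / finrank ℚ K : ℝ) := by
  obtain ⟨C, hC⟩ := exists_isCoveringRadius b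
  refine ⟨C, Nat.cast_nonneg C, fun I hI => ⟨C * ⌊(I.absNorm : ℝ) ^ (1 / finrank ℚ K : ℝ)⌋₊,
    hC I _ hI ?_, ?_⟩⟩
  · have h := Nat.lt_floor_add_one ((I.absNorm : ℝ) ^ (1 / finrank ℚ K : ℝ))
    have h' := pow_lt_pow_left₀ h (by positivity) (finrank_pos (R := ℚ) (M := K)).ne'
    rw [one_div, Real.rpow_inv_natCast_pow (by positivity) finrank_pos.ne'] at h'
    rw [one_div]
    exact_mod_cast h'
  · push_cast
    gcongr
    exact Nat.floor_le (by positivity)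

end IdealPoints

section LogNorms

variable {K ι : Type*} [Field K] [NumberField K] [Fintype ι] (b : Basis ι ℤ (𝓞 K))

theorem natAbs_norm_eq_prod (a : 𝓞 K) :
    ((Algebra.norm ℤ a).natAbs : ℝ) = ∏ σ : K →+* ℂ, ‖σ a‖ := by
  have h := congrArg (‖·‖) (Algebra.norm_eq_prod_embeddings ℚ ℂ (a : K))
  rw [norm_prod, ← Fintype.prod_equiv (RingHom.equivRatAlgHom K ℂ) (fun f => ‖f a‖)
      (fun φ => ‖φ a‖) fun _ => by simp [RingHom.equivRatAlgHom_apply]] at h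
  rw [← h, ← Algebra.coe_norm_int]
  simp [Nat.cast_natAbs]

theorem log_natAbs_norm_eq_sum (a : 𝓞 K) :
    Real.log (Algebra.norm ℤ a).natAbs = ∑ σ : K →+* ℂ, Real.log ‖σ a‖ := by
  rw [natAbs_norm_eq_prod]
  by_cases ha : a = 0
  · simp [ha]
  · exact Real.log_prod fun σ _ => by simpa using ha

theorem exists_norm_embedding_le : ∃ B : ℝ, 1 ≤ B ∧ ∀ (σ : K →+* ℂ) (R : ℕ),
    ∀ a ∈ latticeBox b R, ‖σ a‖ ≤ B * R := by
  let S : (K →+* ℂ) → ℝ := fun σ => ∑ i, ‖σ (b i)‖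
  have hS : ∀ σ, 0 ≤ S σ := fun σ => Finset.sum_nonneg fun i _ => norm_nonneg _
  refine ⟨1 + ∑ σ, S σ, by linarith [Finset.sum_nonneg fun σ (_ : σ ∈ Finset.univ) => hS σ],
    fun σ R a ha => ?_⟩
  have h := norm_map_le_of_mem_latticeBox (σ.comp (algebraMap (𝓞 K) K)).toAddMonoidHom ha
  refine h.trans (mul_le_mul_of_nonneg_right ?_ (Nat.cast_nonneg R))
  exact (Finset.single_le_sum (fun σ _ => hS σ) (Finset.mem_univ σ)).trans (by simp)

theorem exists_natAbs_norm_le : ∃ B : ℕ, 1 ≤ B ∧ ∀ R : ℕ, ∀ a ∈ latticeBox b R,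
    (Algebra.norm ℤ a).natAbs ≤ (B * R) ^ finrank ℚ K := by
  obtain ⟨C, hC1, hC⟩ := exists_norm_embedding_le b
  refine ⟨⌈C⌉₊, Nat.one_le_ceil_iff.mpr (by linarith), fun R a ha => ?_⟩
  have h : ((Algebra.norm ℤ a).natAbs : ℝ) ≤ ((⌈C⌉₊ * R : ℕ) : ℝ) ^ finrank ℚ K := by
    rw [natAbs_norm_eq_prod, ← Embeddings.card K ℂ, ← Finset.card_univ, ← Finset.prod_const]
    refine Finset.prod_le_prod (fun _ _ => norm_nonneg _) fun σ _ => (hC σ R a ha).trans ?_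
    push_cast
    gcongr
    exact Nat.le_ceil C
  exact_mod_cast h

theorem exists_neg_mul_le_log_norm_embedding : ∃ A : ℝ, ∀ (σ : K →+* ℂ) (R : ℕ),
    ∀ a ∈ latticeBox b R, -(A * R) ≤ Real.log ‖σ a‖ := by
  classical
  obtain ⟨B, hB1, hB⟩ := exists_norm_embedding_le b
  refine ⟨finrank ℚ K * B, fun σ R a ha => ?_⟩
  have hnorm : 0 ≤ ∑ τ : K →+* ℂ, Real.log ‖τ a‖ := by
    rw [← log_natAbs_norm_eq_sum]
    exact Real.log_natCast_nonneg _
  have hothers : ∑ τ ∈ Finset.univ.erase σ, Real.log ‖τ a‖ ≤ finrank ℚ K * B * R :=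
    calc ∑ τ ∈ Finset.univ.erase σ, Real.log ‖τ a‖
        ≤ ∑ _τ ∈ Finset.univ.erase σ, B * R := Finset.sum_le_sum fun τ _ =>
          (Real.log_le_self (norm_nonneg _)).trans (hB τ R a ha)
      _ ≤ ∑ _τ : K →+* ℂ, B * R := Finset.sum_le_sum_of_subset_of_nonneg
          (Finset.erase_subset _ _) fun _ _ _ => by positivity
      _ = finrank ℚ K * B * R := by simp [Embeddings.card, mul_assoc]
  rw [← Finset.add_sum_erase _ _ (Finset.mem_univ σ)] at hnorm
  linarith

theorem exists_le_sum_log_natAbs_norm : ∃ C : ℝ, ∀ R : ℕ, 1 ≤ R →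
    (2 * R + 1) ^ finrank ℚ K * (finrank ℚ K * Real.log R - C) ≤
      ∑ a ∈ latticeBox b R, Real.log (Algebra.norm ℤ a).natAbs := by
  obtain ⟨A, hA⟩ := exists_neg_mul_le_log_norm_embedding b
  obtain ⟨i⟩ := b.index_nonempty
  choose c hc using fun σ : K →+* ℂ => exists_mul_log_sub_le_sum_log_norm (i := i)
    (σ.comp (algebraMap (𝓞 K) K)).toAddMonoidHom (by simpa using b.ne_zero i) (hA σ)
  refine ⟨∑ σ, c σ, fun R hR => ?_⟩
  calc (2 * R + 1) ^ finrank ℚ K * (finrank ℚ K * Real.log R - ∑ σ, c σ)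
      = ∑ σ : K →+* ℂ, (2 * R + 1) ^ Fintype.card ι * (Real.log R - c σ) := by
        rw [← Finset.mul_sum, Finset.sum_sub_distrib, Finset.sum_const, Finset.card_univ,
          Embeddings.card, nsmul_eq_mul, card_eq_finrank b]
    _ ≤ ∑ σ : K →+* ℂ, ∑ a ∈ latticeBox b R, Real.log ‖σ a‖ :=
        Finset.sum_le_sum fun σ _ => hc σ R hR
    _ = _ := by simp_rw [log_natAbs_norm_eq_sum]; exact Finset.sum_comm

theorem exists_abs_sum_log_natAbs_norm_sub_le : ∃ C : ℝ, ∀ R : ℕ, 1 ≤ R →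
    |∑ a ∈ latticeBox b R, Real.log (Algebra.norm ℤ a).natAbs -
      (2 * R + 1) ^ finrank ℚ K * (finrank ℚ K * Real.log R)| ≤
        C * (2 * R + 1) ^ finrank ℚ K := by
  obtain ⟨B, hB1, hB⟩ := exists_natAbs_norm_le b
  obtain ⟨c, hc⟩ := exists_le_sum_log_natAbs_norm b
  set n := finrank ℚ K
  refine ⟨max (n * Real.log B) c, fun R hR => ?_⟩
  have hlog : ∀ a ∈ latticeBox b R, Real.log (Algebra.norm ℤ a).natAbs ≤
      n * Real.log B + n * Real.log R := by
    intro a ha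
    rw [← mul_add, ← Real.log_mul (by positivity) (by positivity), ← Real.log_pow]
    rcases (Algebra.norm ℤ a).natAbs.eq_zero_or_pos with h0 | hpos
    · rw [h0, Nat.cast_zero, Real.log_zero]
      exact_mod_cast Real.log_natCast_nonneg ((B * R) ^ n)
    · exact Real.log_le_log (by positivity) (by exact_mod_cast hB R a ha)
  have hupper := Finset.sum_le_sum hlog
  rw [Finset.sum_const, card_latticeBox, card_eq_finrank b, nsmul_eq_mul] at hupper
  push_cast at hupper
  have hw : (0 : ℝ) ≤ (2 * R + 1) ^ n := by positivity
  rw [abs_le]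
  constructor
  · linarith [hc R hR, mul_le_mul_of_nonneg_right (le_max_right (n * Real.log B) c) hw]
  · linarith [mul_le_mul_of_nonneg_right (le_max_left (n * Real.log B) c) hw]

end LogNorms

section IdealPointCounts

variable {K ι : Type*} [Field K] [NumberField K] [Fintype ι] (b : Basis ι ℤ (𝓞 K))

theorem exists_abs_absNorm_mul_card_sub_le {B : ℝ} (hB : 0 ≤ B) : ∃ M : ℝ, 0 ≤ M ∧
    ∀ I : Ideal (𝓞 K), I ≠ ⊥ → ∀ R : ℕ, (I.absNorm : ℝ) ≤ (B * R) ^ finrank ℚ K →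
      |(I.absNorm * (pointsInBox b I.toAddSubgroup R).card : ℝ) - (2 * R + 1) ^ finrank ℚ K| ≤
        M * (2 * R + 1) ^ (finrank ℚ K - 1) * (I.absNorm : ℝ) ^ (1 / finrank ℚ K : ℝ) := by
  obtain ⟨C, hC0, hC⟩ := exists_isCoveringRadius_le_rpow b
  set n := finrank ℚ K
  have hn : n ≠ 0 := finrank_pos.ne'
  refine ⟨2 * n * C * (1 + C * B) ^ (n - 1), by positivity, fun I hI R hIR => ?_⟩
  obtain ⟨D, hD, hDC⟩ := hC I hI
  have hroot : (I.absNorm : ℝ) ^ (1 / n : ℝ) ≤ B * R := by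
    rw [one_div, Real.rpow_inv_le_iff_of_pos (by positivity) (by positivity) (by positivity)]
    exact_mod_cast hIR
  have hbase : (2 * R + 1 + 2 * D : ℝ) ≤ (1 + C * B) * (2 * R + 1) := by
    have := hDC.trans (mul_le_mul_of_nonneg_left hroot hC0)
    have : 0 ≤ C * B := by positivity
    linarith
  have := b.index_nonempty
  have h := hD.abs_index_mul_card_sub_le R
  rw [← absNorm_eq_index, card_eq_finrank b] at h
  calc _ ≤ 2 * n * (D : ℝ) * (2 * R + 1 + 2 * D) ^ (n - 1) := h
    _ ≤ 2 * n * (C * (I.absNorm : ℝ) ^ (1 / n : ℝ)) * ((1 + C * B) * (2 * R + 1)) ^ (n - 1) := by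
        gcongr
    _ = _ := by rw [mul_pow]; ring

variable {b} in
theorem card_pointsInBox_eq_one_of_lt_absNorm {B : ℕ}
    (hB : ∀ R : ℕ, ∀ a ∈ latticeBox b R, (Algebra.norm ℤ a).natAbs ≤ (B * R) ^ finrank ℚ K)
    {I : Ideal (𝓞 K)} {R : ℕ} (hI : (B * R) ^ finrank ℚ K < I.absNorm) :
    (pointsInBox b I.toAddSubgroup R).card = 1 := by
  refine Finset.card_eq_one.mpr ⟨0, Finset.eq_singleton_iff_unique_mem.mpr
    ⟨mem_pointsInBox.mpr ⟨zero_mem_latticeBox b R, zero_mem _⟩, fun a ha => ?_⟩⟩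
  obtain ⟨haR, haI⟩ := mem_pointsInBox.mp ha
  by_contra ha0
  have hdvd := Int.natAbs_dvd_natAbs.mpr (Ideal.absNorm_dvd_norm_of_mem haI)
  have hpos := Int.natAbs_pos.mpr (Algebra.norm_ne_zero_iff.mpr ha0)
  exact (hI.trans_le (Nat.le_of_dvd hpos hdvd)).not_ge (hB R a haR)

theorem exists_card_sub_one_mul_absNorm_le : ∃ M : ℝ, 0 ≤ M ∧
    ∀ I : Ideal (𝓞 K), I ≠ ⊥ → ∀ R : ℕ,
      ((pointsInBox b I.toAddSubgroup R).card - 1 : ℝ) * I.absNorm ≤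
        M * (2 * R + 1) ^ finrank ℚ K := by
  obtain ⟨B, hB1, hB⟩ := exists_natAbs_norm_le b
  obtain ⟨M, hM0, hM⟩ := exists_abs_absNorm_mul_card_sub_le b (Nat.cast_nonneg B)
  refine ⟨1 + M * B, by positivity, fun I hI R => ?_⟩
  rcases lt_or_ge ((B * R) ^ finrank ℚ K) I.absNorm with hlt | hle
  · rw [card_pointsInBox_eq_one_of_lt_absNorm hB hlt, Nat.cast_one, sub_self, zero_mul]
    positivity
  · have hle' : (I.absNorm : ℝ) ≤ (B * R) ^ finrank ℚ K := by exact_mod_cast hle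
    have hroot : (I.absNorm : ℝ) ^ (1 / finrank ℚ K : ℝ) ≤ B * (2 * R + 1) := by
      rw [one_div, Real.rpow_inv_le_iff_of_pos (by positivity) (by positivity)
        (by exact_mod_cast finrank_pos), Real.rpow_natCast]
      refine hle'.trans ?_
      gcongr
      linarith [(Nat.cast_nonneg R : (0 : ℝ) ≤ R)]
    have hcount := (abs_le.mp (hM I hI R hle')).2
    have herror : M * (2 * R + 1) ^ (finrank ℚ K - 1) * (I.absNorm : ℝ) ^ (1 / finrank ℚ K : ℝ) ≤
        M * B * (2 * R + 1) ^ finrank ℚ K :=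
      calc _ ≤ M * (2 * R + 1 : ℝ) ^ (finrank ℚ K - 1) * (B * (2 * R + 1)) := by gcongr
        _ = M * B * ((2 * R + 1) ^ (finrank ℚ K - 1) * (2 * R + 1)) := by ring
        _ = _ := by rw [pow_sub_one_mul finrank_pos.ne']
    linarith [(Nat.cast_nonneg I.absNorm : (0 : ℝ) ≤ I.absNorm)]

end IdealPointCounts

section VonMangoldtSums

open ArithmeticFunction (vonMangoldt)

theorem sum_mul_le_sum_mul_of_antitoneOn {d h : ℕ → ℝ} (hd : ∀ k, 0 ≤ ∑ m ∈ Finset.Ioc 0 k, d m)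
    (hh : AntitoneOn h (Set.Ici 1)) (Y : ℕ) :
    (∑ m ∈ Finset.Ioc 0 Y, d m) * h Y ≤ ∑ m ∈ Finset.Ioc 0 Y, d m * h m := by
  induction Y with
  | zero => simp
  | succ Y ih =>
    have hstep : (∑ m ∈ Finset.Ioc 0 Y, d m) * h (Y + 1) ≤ (∑ m ∈ Finset.Ioc 0 Y, d m) * h Y := by
      rcases Y.eq_zero_or_pos with rfl | hY
      · simp
      · exact mul_le_mul_of_nonneg_left (hh hY (Nat.le_add_left 1 Y) Y.le_succ) (hd Y)
    rw [Finset.sum_Ioc_succ_top (Nat.zero_le Y), Finset.sum_Ioc_succ_top (Nat.zero_le Y), add_mul]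
    linarith

theorem sum_rpow_sub_one_le {s : ℝ} (hs0 : 0 < s) (hs1 : s ≤ 1) (Y : ℕ) :
    ∑ m ∈ Finset.Ioc 0 Y, (m : ℝ) ^ (s - 1) ≤ (Y : ℝ) ^ s / s := by
  induction Y with
  | zero => simp [Real.zero_rpow hs0.ne']
  | succ Y ih =>
    have hY : (0 : ℝ) < (Y + 1 : ℕ) := by positivity
    have hbernoulli := rpow_one_add_le_one_add_mul_self (s := -((Y + 1 : ℕ) : ℝ)⁻¹)
      (neg_le_neg (inv_le_one_of_one_le₀ (by simp))) hs0.le hs1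
    have hratio : 1 + -((Y + 1 : ℕ) : ℝ)⁻¹ = Y / (Y + 1 : ℕ) := by
      field_simp
      push_cast
      ring
    rw [hratio, Real.div_rpow (by positivity) hY.le, div_le_iff₀ (by positivity)] at hbernoulli
    rw [Finset.sum_Ioc_succ_top (Nat.zero_le Y)]
    rw [le_div_iff₀ hs0] at ih ⊢
    rw [Real.rpow_sub_one hY.ne', add_mul]
    linarith [show ((Y + 1 : ℕ) : ℝ) ^ s / (Y + 1 : ℕ) * s =
      s * ((Y + 1 : ℕ) : ℝ)⁻¹ * ((Y + 1 : ℕ) : ℝ) ^ s by ring]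

theorem sum_vonMangoldt_le (Y : ℕ) :
    ∑ m ∈ Finset.Ioc 0 Y, vonMangoldt m ≤ (Real.log 4 + 4) * Y := by
  have h := Chebyshev.psi_le_const_mul_self (Nat.cast_nonneg Y : (0 : ℝ) ≤ Y)
  rwa [Chebyshev.psi, Nat.floor_natCast] at h

theorem sum_vonMangoldt_mul_rpow_le {s : ℝ} (hs0 : 0 < s) (hs1 : s ≤ 1) (Y : ℕ) :
    ∑ m ∈ Finset.Ioc 0 Y, vonMangoldt m * (m : ℝ) ^ (s - 1) ≤
      (Real.log 4 + 4) * ((Y : ℝ) ^ s / s) := by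
  have hd : ∀ k, 0 ≤ ∑ m ∈ Finset.Ioc 0 k, (Real.log 4 + 4 - vonMangoldt m) := fun k => by
    rw [Finset.sum_sub_distrib, Finset.sum_const, Nat.card_Ioc, nsmul_eq_mul, Nat.sub_zero]
    linarith [sum_vonMangoldt_le k]
  have hh : AntitoneOn (fun m : ℕ => (m : ℝ) ^ (s - 1)) (Set.Ici 1) := fun m hm k _ hmk =>
    Real.rpow_le_rpow_of_nonpos (by exact_mod_cast hm) (by exact_mod_cast hmk) (by linarith)
  have h := sum_mul_le_sum_mul_of_antitoneOn hd hh Y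
  simp only [sub_mul, Finset.sum_sub_distrib _ (fun m => vonMangoldt m * _), ← Finset.mul_sum] at h
  have hpos := mul_nonneg (hd Y) (Real.rpow_nonneg (Nat.cast_nonneg Y) (s - 1))
  have hlog4 : 0 ≤ Real.log 4 := Real.log_nonneg (by norm_num)
  have hlog : 0 ≤ Real.log 4 + 4 := by linarith
  linarith [mul_le_mul_of_nonneg_left (sum_rpow_sub_one_le hs0 hs1 Y) hlog]

theorem summable_log_div_sq : Summable fun m : ℕ => Real.log m / (m : ℝ) ^ 2 := by
  have h : Summable fun m : ℕ => 2 * (m : ℝ) ^ (-(3 / 2) : ℝ) :=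
    (Real.summable_nat_rpow.mpr (by norm_num)).mul_left 2
  refine h.of_nonneg_of_le (fun m => by positivity) fun m => ?_
  rcases m.eq_zero_or_pos with rfl | hm
  · simp
  have hm' : (0 : ℝ) < m := by exact_mod_cast hm
  have hlog := Real.log_le_rpow_div hm'.le (show (0 : ℝ) < 1 / 2 by norm_num)
  rw [div_le_iff₀ (by positivity), mul_assoc, ← Real.rpow_natCast, ← Real.rpow_add hm']
  norm_num at hlog ⊢
  linarith

theorem summable_vonMangoldt_div_sq : Summable fun m : ℕ => vonMangoldt m / (m : ℝ) ^ 2 :=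
  summable_log_div_sq.of_nonneg_of_le
    (fun _ => div_nonneg ArithmeticFunction.vonMangoldt_nonneg (by positivity))
    fun m => by gcongr; exact ArithmeticFunction.vonMangoldt_le_log

end VonMangoldtSums

section Interpolation

variable {φ : ℕ → ℝ} {n B : ℕ} {C : ℝ}

theorem map_floor_pow_le_of_monotone (hmono : Monotone φ) (hB : 1 ≤ B)
    (hφ : ∀ R : ℕ, 1 ≤ R → φ ((B * R) ^ n) ≤ n * Real.log R + C) {z : ℝ} (hz : 1 ≤ z) :
    φ ⌊z ^ n⌋₊ ≤ n * Real.log z + (n * Real.log 2 + C) := by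
  have hfloor : (⌊z⌋₊ : ℝ) ≤ z := Nat.floor_le (by linarith)
  have hle : ⌊z ^ n⌋₊ ≤ (B * (⌊z⌋₊ + 1)) ^ n := by
    refine Nat.floor_le_of_le ?_
    push_cast
    have hB' : (1 : ℝ) ≤ B := by exact_mod_cast hB
    gcongr
    nlinarith [Nat.lt_floor_add_one z]
  calc φ ⌊z ^ n⌋₊ ≤ φ ((B * (⌊z⌋₊ + 1)) ^ n) := hmono hle
    _ ≤ n * Real.log (⌊z⌋₊ + 1 : ℕ) + C := hφ _ (Nat.le_add_left 1 _)
    _ ≤ n * Real.log (2 * z) + C := by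
        gcongr
        push_cast
        linarith
    _ = n * Real.log z + (n * Real.log 2 + C) := by
        rw [Real.log_mul two_ne_zero (by linarith)]
        ring

theorem le_map_floor_pow_of_monotone (hmono : Monotone φ) (h0 : ∀ k, 0 ≤ φ k) (hB : 1 ≤ B)
    (hC : 0 ≤ C) (hφ : ∀ R : ℕ, 1 ≤ R → n * Real.log R - C ≤ φ ((B * R) ^ n)) {z : ℝ}
    (hz : 1 ≤ z) : n * Real.log z - (n * Real.log (2 * B) + C) ≤ φ ⌊z ^ n⌋₊ := by
  set R := ⌊z / B⌋₊
  have hR : (R : ℝ) ≤ z / B := Nat.floor_le (by positivity)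
  have hlogz : Real.log z = Real.log (2 * B) + Real.log (z / (2 * B)) := by
    rw [Real.log_div (by positivity) (by positivity)]
    ring
  have hlt : z / (2 * B) < (R + 1) / 2 := by
    have := Nat.lt_floor_add_one (z / B)
    calc z / (2 * B) = z / B / 2 := by rw [div_div, mul_comm]
      _ < _ := by gcongr
  rcases R.eq_zero_or_pos with hR0 | hRpos
  · have hlog : Real.log (z / (2 * B)) ≤ 0 := by
      refine Real.log_nonpos (by positivity) ?_
      rw [hR0] at hlt
      norm_num at hlt
      linarith
    have := mul_nonpos_of_nonneg_of_nonpos (Nat.cast_nonneg n : (0 : ℝ) ≤ n) hlog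
    rw [hlogz]
    linarith [h0 ⌊z ^ n⌋₊]
  · have hRpos' : (1 : ℝ) ≤ R := by exact_mod_cast hRpos
    have hle : (B * R) ^ n ≤ ⌊z ^ n⌋₊ := by
      refine Nat.le_floor ?_
      push_cast
      gcongr
      rwa [le_div_iff₀' (by positivity)] at hR
    have hlog : Real.log (z / (2 * B)) ≤ Real.log R :=
      Real.log_le_log (by positivity) (by linarith)
    have := mul_le_mul_of_nonneg_left hlog (Nat.cast_nonneg n : (0 : ℝ) ≤ n)
    rw [hlogz]
    linarith [hφ R hRpos, hmono hle]

theorem exists_abs_map_floor_sub_log_le (hmono : Monotone φ) (h0 : ∀ k, 0 ≤ φ k) (hn : n ≠ 0)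
    (hB : 1 ≤ B) (hφ : ∀ R : ℕ, 1 ≤ R → |φ ((B * R) ^ n) - n * Real.log R| ≤ C) :
    ∃ C' : ℝ, ∀ x : ℝ, 1 ≤ x → |φ ⌊x⌋₊ - Real.log x| ≤ C' := by
  have hC : 0 ≤ C := (abs_nonneg _).trans (hφ 1 le_rfl)
  have hB' : (1 : ℝ) ≤ B := by exact_mod_cast hB
  refine ⟨n * Real.log (2 * B) + C, fun x hx => ?_⟩
  have hz : 1 ≤ x ^ (n : ℝ)⁻¹ := Real.one_le_rpow hx (by positivity)
  have hupper := map_floor_pow_le_of_monotone (n := n) (C := C) hmono hB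
    (fun R hR => by linarith [(abs_le.mp (hφ R hR)).2]) hz
  have hlower := le_map_floor_pow_of_monotone (n := n) (C := C) hmono h0 hB hC
    (fun R hR => by linarith [(abs_le.mp (hφ R hR)).1]) hz
  have hlog : n * Real.log (x ^ (n : ℝ)⁻¹) = Real.log x := by
    rw [Real.log_rpow (by linarith), mul_inv_cancel_left₀ (by exact_mod_cast hn)]
  rw [Real.rpow_inv_natCast_pow (by linarith) hn, hlog] at hupper hlower
  have h2 : n * Real.log 2 ≤ n * Real.log (2 * B) := by gcongr; linarith
  rw [abs_le]
  constructor <;> linarith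

end Interpolation

section PrimeIdeals

open ArithmeticFunction (vonMangoldt)

variable (K : Type*) [Field K] [NumberField K]

open Classical in
/-- The nonzero prime ideals of `𝓞 K` of norm at most `Y`. -/
noncomputable def primeIdeals (Y : ℕ) : Finset (Ideal (𝓞 K)) :=
  (Ideal.finite_setOfPred_absNorm_le (S := 𝓞 K) Y).toFinset.filter Prime

variable {K} {P : Ideal (𝓞 K)} {Y : ℕ}

theorem mem_primeIdeals : P ∈ primeIdeals K Y ↔ P.absNorm ≤ Y ∧ Prime P := by
  simp [primeIdeals]

theorem primeIdeals_mono : Monotone (primeIdeals K) := fun _ _ h _ hP =>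
  mem_primeIdeals.mpr ((mem_primeIdeals.mp hP).imp_left (·.trans h))

theorem exists_absNorm_eq_prime_pow (hP : Prime P) :
    ∃ q f : ℕ, q.Prime ∧ f ≠ 0 ∧ (q : 𝓞 K) ∈ P ∧ P.absNorm = q ^ f := by
  have := (Ideal.isPrime_of_prime hP).isMaximal hP.ne_zero
  obtain ⟨q, f, hf, hqP, hq, hN⟩ := Ideal.exists_prime_and_absNorm_eq_pow P
  exact ⟨q, f, hq, hf.ne', by simpa using hqP, hN⟩

theorem two_le_absNorm (hP : Prime P) : 2 ≤ P.absNorm := by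
  obtain ⟨q, f, hq, hf, -, hN⟩ := exists_absNorm_eq_prime_pow hP
  exact hN ▸ hq.two_le.trans (Nat.le_self_pow hf q)

/-- The primes of norm `q ^ f` are distinct prime divisors of `q`, which has norm
`q ^ finrank ℚ K`. -/
theorem card_mul_le_finrank {q f : ℕ} (hq : q.Prime) {s : Finset (Ideal (𝓞 K))}
    (hs : ∀ P ∈ s, Prime P ∧ P.absNorm = q ^ f) : s.card * f ≤ finrank ℚ K := by
  have hdvd : ∏ P ∈ s, P ∣ Ideal.span {(q : 𝓞 K)} := by
    refine Finset.prod_primes_dvd _ (fun P hP => (hs P hP).1) fun P hP => ?_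
    obtain ⟨q', f', hq', hf', hmem, hN⟩ := exists_absNorm_eq_prime_pow (hs P hP).1
    have hqq' : q' ∣ q := hq'.dvd_of_dvd_pow ((hs P hP).2 ▸ hN ▸ dvd_pow_self q' hf')
    rw [Ideal.dvd_span_singleton]
    exact (Nat.prime_dvd_prime_iff_eq hq' hq).mp hqq' ▸ hmem
  have hN := map_dvd Ideal.absNorm hdvd
  rw [map_prod, Ideal.absNorm_span_natCast, RingOfIntegers.rank,
    Finset.prod_congr rfl fun P hP => (hs P hP).2, Finset.prod_const, ← pow_mul, mul_comm] at hN
  exact (Nat.pow_dvd_pow_iff_le_right hq.one_lt).mp hN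

theorem card_mul_log_le {m : ℕ} {s : Finset (Ideal (𝓞 K))}
    (hs : ∀ P ∈ s, Prime P ∧ P.absNorm = m) :
    s.card * Real.log m ≤ finrank ℚ K * vonMangoldt m := by
  rcases s.eq_empty_or_nonempty with rfl | ⟨P, hP⟩
  · rw [Finset.card_empty, Nat.cast_zero, zero_mul]
    exact mul_nonneg (Nat.cast_nonneg _) ArithmeticFunction.vonMangoldt_nonneg
  obtain ⟨q, f, hq, hf, -, hN⟩ := exists_absNorm_eq_prime_pow (hs P hP).1
  obtain rfl : m = q ^ f := (hs P hP).2 ▸ hN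
  rw [ArithmeticFunction.vonMangoldt_apply_pow hf, ArithmeticFunction.vonMangoldt_apply_prime hq,
    Nat.cast_pow, Real.log_pow, ← mul_assoc]
  gcongr
  exact_mod_cast card_mul_le_finrank hq hs

theorem sum_primeIdeals_le_sum_vonMangoldt (Y : ℕ) {g : ℕ → ℝ} (hg : ∀ m, 0 ≤ g m) :
    ∑ P ∈ primeIdeals K Y, Real.log P.absNorm * g P.absNorm ≤
      finrank ℚ K * ∑ m ∈ Finset.Ioc 0 Y, vonMangoldt m * g m := by
  classical
  have hmaps : ∀ P ∈ primeIdeals K Y, P.absNorm ∈ Finset.Ioc 0 Y := fun P hP => by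
    obtain ⟨hY, hP⟩ := mem_primeIdeals.mp hP
    exact Finset.mem_Ioc.mpr ⟨by linarith [two_le_absNorm hP], hY⟩
  rw [← Finset.sum_fiberwise_of_maps_to hmaps, Finset.mul_sum]
  refine Finset.sum_le_sum fun m _ => ?_
  set s := (primeIdeals K Y).filter fun P => P.absNorm = m
  have hcard := card_mul_log_le (s := s) (m := m) fun P hP =>
    ⟨(mem_primeIdeals.mp (Finset.mem_filter.mp hP).1).2, (Finset.mem_filter.mp hP).2⟩
  calc ∑ P ∈ s, Real.log P.absNorm * g P.absNorm = s.card * Real.log m * g m := by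
        rw [Finset.sum_congr rfl fun P hP => by rw [(Finset.mem_filter.mp hP).2],
          Finset.sum_const, nsmul_eq_mul, mul_assoc]
    _ ≤ finrank ℚ K * vonMangoldt m * g m := mul_le_mul_of_nonneg_right hcard (hg m)
    _ = _ := mul_assoc _ _ _

theorem mem_pow_iff_le_count [DecidableEq (Ideal (𝓞 K))] (hP : Prime P) {a : 𝓞 K} (ha : a ≠ 0)
    {k : ℕ} : a ∈ P ^ k ↔
      k ≤ (UniqueFactorizationMonoid.normalizedFactors (Ideal.span {a})).count P := by
  rw [← Ideal.dvd_span_singleton, Multiset.le_count_iff_replicate_le,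
    UniqueFactorizationMonoid.dvd_iff_normalizedFactors_le_normalizedFactors
      (pow_ne_zero k hP.ne_zero) (by simpa using ha),
    UniqueFactorizationMonoid.normalizedFactors_pow,
    UniqueFactorizationMonoid.normalizedFactors_irreducible hP.irreducible, normalize_eq,
    Multiset.nsmul_singleton]

theorem log_absNorm_eq_sum [DecidableEq (Ideal (𝓞 K))] {I : Ideal (𝓞 K)} (hI : I ≠ ⊥)
    (hY : I.absNorm ≤ Y) : Real.log I.absNorm = ∑ P ∈ primeIdeals K Y,
      (UniqueFactorizationMonoid.normalizedFactors I).count P * Real.log P.absNorm := by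
  have hsub : (UniqueFactorizationMonoid.normalizedFactors I).toFinset ⊆ primeIdeals K Y := by
    intro P hP
    have hP := Multiset.mem_toFinset.mp hP
    refine mem_primeIdeals.mpr
      ⟨le_trans ?_ hY, UniqueFactorizationMonoid.prime_of_normalized_factor P hP⟩
    exact Nat.le_of_dvd (Nat.pos_of_ne_zero (Ideal.absNorm_eq_zero_iff.not.mpr hI))
      (map_dvd Ideal.absNorm (UniqueFactorizationMonoid.dvd_of_mem_normalizedFactors hP))
  conv_lhs => rw [← Ideal.prod_normalizedFactors_eq_self hI,
    Finset.prod_multiset_count_of_subset _ _ hsub, map_prod, Nat.cast_prod]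
  rw [Real.log_prod fun P hP => Nat.cast_ne_zero.mpr (by
    rw [map_pow]
    exact pow_ne_zero _ (Ideal.absNorm_eq_zero_iff.not.mpr (mem_primeIdeals.mp hP).2.ne_zero))]
  simp only [map_pow, Nat.cast_pow, Real.log_pow]

theorem log_natAbs_norm_eq_sum_primeIdeals {a : 𝓞 K} (ha : a ≠ 0)
    (hY : (Algebra.norm ℤ a).natAbs ≤ Y) [∀ I : Ideal (𝓞 K), Decidable (a ∈ I)] :
    Real.log (Algebra.norm ℤ a).natAbs = ∑ P ∈ primeIdeals K Y, ∑ k ∈ Finset.Icc 1 Y,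
      if a ∈ P ^ k then Real.log P.absNorm else 0 := by
  classical
  have hN : (Ideal.span {a}).absNorm = (Algebra.norm ℤ a).natAbs := Ideal.absNorm_span_singleton a
  have hNpos : 0 < (Algebra.norm ℤ a).natAbs := by
    simpa [Int.natAbs_pos, Algebra.norm_eq_zero_iff] using ha
  rw [← hN, log_absNorm_eq_sum (by simpa using ha) (hN.trans_le hY)]
  refine Finset.sum_congr rfl fun P hP => ?_
  have hPP := (mem_primeIdeals.mp hP).2
  set c := (UniqueFactorizationMonoid.normalizedFactors (Ideal.span {a})).count P
  have hc : c ≤ Y := by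
    have h := Ideal.absNorm_dvd_norm_of_mem ((mem_pow_iff_le_count hPP ha).mpr (le_refl c))
    rw [← Int.dvd_natAbs, Int.natCast_dvd_natCast, map_pow] at h
    exact (Nat.lt_pow_self (two_le_absNorm hPP)).le.trans ((Nat.le_of_dvd hNpos h).trans hY)
  have hfilter : (Finset.Icc 1 Y).filter (a ∈ P ^ ·) = Finset.Icc 1 c := by
    ext k
    rw [Finset.mem_filter, Finset.mem_Icc, Finset.mem_Icc, mem_pow_iff_le_count hPP ha]
    omega
  rw [← Finset.sum_filter, hfilter, Finset.sum_const, Nat.card_Icc, Nat.add_sub_cancel,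
    nsmul_eq_mul]

/-- The `- 1` removes the origin, which lies in every `P ^ k` whereas `log 0 = 0`. -/
theorem sum_log_natAbs_norm_eq {ι : Type*} [Fintype ι] {b : Basis ι ℤ (𝓞 K)} {R : ℕ}
    (hY : ∀ a ∈ latticeBox b R, (Algebra.norm ℤ a).natAbs ≤ Y) :
    ∑ a ∈ latticeBox b R, Real.log (Algebra.norm ℤ a).natAbs =
      ∑ P ∈ primeIdeals K Y, ∑ k ∈ Finset.Icc 1 Y,
        Real.log P.absNorm * ((pointsInBox b (P ^ k).toAddSubgroup R).card - 1) := by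
  classical
  rw [← Finset.add_sum_erase _ _ (zero_mem_latticeBox b R)]
  simp only [Algebra.norm_zero, Int.natAbs_zero, Nat.cast_zero, Real.log_zero, zero_add]
  rw [Finset.sum_congr rfl fun a ha => log_natAbs_norm_eq_sum_primeIdeals
    (Finset.ne_of_mem_erase ha) (hY a (Finset.mem_of_mem_erase ha)), Finset.sum_comm]
  refine Finset.sum_congr rfl fun P _ => ?_
  rw [Finset.sum_comm]
  refine Finset.sum_congr rfl fun k _ => ?_
  have hfilter : ((latticeBox b R).erase 0).filter (· ∈ P ^ k) =
      (pointsInBox b (P ^ k).toAddSubgroup R).erase 0 := by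
    ext a
    simp only [Finset.mem_filter, Finset.mem_erase, mem_pointsInBox, Submodule.mem_toAddSubgroup]
    tauto
  rw [← Finset.sum_filter, Finset.sum_const, nsmul_eq_mul, mul_comm, hfilter,
    Finset.card_erase_of_mem (mem_pointsInBox.mpr ⟨zero_mem_latticeBox b R, zero_mem _⟩),
    Nat.cast_sub (card_pointsInBox_pos b _ R), Nat.cast_one]

end PrimeIdeals

section Mertens

open ArithmeticFunction (vonMangoldt)

variable {K ι : Type*} [Field K] [NumberField K] [Fintype ι] (b : Basis ι ℤ (𝓞 K))

theorem sum_log_mul_rpow_add_one_le {M w : ℝ} (hM : 0 ≤ M) (hw : 0 ≤ w) {B R : ℕ}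
    (hR : (R : ℝ) ≤ w) :
    ∑ P ∈ primeIdeals K ((B * R) ^ finrank ℚ K), Real.log P.absNorm *
      (M * w ^ (finrank ℚ K - 1) * (P.absNorm : ℝ) ^ ((1 / finrank ℚ K : ℝ) - 1) + 1) ≤
      finrank ℚ K * (Real.log 4 + 4) *
        (M * finrank ℚ K * B + (B : ℝ) ^ finrank ℚ K) * w ^ finrank ℚ K := by
  set n := finrank ℚ K
  have hn : n ≠ 0 := finrank_pos.ne'
  have hn0 : (0 : ℝ) < n := by exact_mod_cast finrank_pos
  have hn1 : (1 : ℝ) ≤ n := by exact_mod_cast finrank_pos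
  have hpow : (((B * R) ^ n : ℕ) : ℝ) ^ (1 / n : ℝ) = B * R := by
    rw [one_div, Nat.cast_pow, Real.pow_rpow_inv_natCast (by positivity) hn, Nat.cast_mul]
  have hsum := sum_vonMangoldt_mul_rpow_le (by positivity) ((div_le_one hn0).mpr hn1)
    ((B * R) ^ n)
  have hBR : (B * R : ℝ) ≤ B * w := by gcongr
  calc _ ≤ n * ∑ m ∈ Finset.Ioc 0 ((B * R) ^ n),
          vonMangoldt m * (M * w ^ (n - 1) * (m : ℝ) ^ ((1 / n : ℝ) - 1) + 1) :=
        sum_primeIdeals_le_sum_vonMangoldt _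
          (g := fun m => M * w ^ (n - 1) * (m : ℝ) ^ ((1 / n : ℝ) - 1) + 1) fun m => by positivity
    _ = n * (M * w ^ (n - 1) * ∑ m ∈ Finset.Ioc 0 ((B * R) ^ n),
          vonMangoldt m * (m : ℝ) ^ ((1 / n : ℝ) - 1) +
            ∑ m ∈ Finset.Ioc 0 ((B * R) ^ n), vonMangoldt m) := by
        rw [Finset.mul_sum _ _ (M * w ^ (n - 1)), ← Finset.sum_add_distrib]
        congr 1
        exact Finset.sum_congr rfl fun m _ => by ring
    _ ≤ n * (M * w ^ (n - 1) * ((Real.log 4 + 4) * (B * w / (1 / n))) +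
          (Real.log 4 + 4) * (B * w) ^ n) := by
        gcongr
        · refine hsum.trans ?_
          rw [hpow]
          gcongr
        · refine (sum_vonMangoldt_le _).trans ?_
          push_cast
          gcongr
    _ = _ := by
        rw [mul_pow, ← pow_sub_one_mul hn w]
        field_simp

theorem exists_abs_sum_log_mul_card_sub_le {B : ℕ} : ∃ C : ℝ, ∀ R : ℕ,
    |∑ P ∈ primeIdeals K ((B * R) ^ finrank ℚ K),
        Real.log P.absNorm * ((pointsInBox b P.toAddSubgroup R).card - 1) -
      (2 * R + 1) ^ finrank ℚ K * ∑ P ∈ primeIdeals K ((B * R) ^ finrank ℚ K),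
        Real.log P.absNorm / P.absNorm| ≤ C * (2 * R + 1) ^ finrank ℚ K := by
  obtain ⟨M, hM0, hM⟩ := exists_abs_absNorm_mul_card_sub_le b (Nat.cast_nonneg B)
  refine ⟨finrank ℚ K * (Real.log 4 + 4) * (M * finrank ℚ K * B + (B : ℝ) ^ finrank ℚ K),
    fun R => le_trans ?_ <|
      sum_log_mul_rpow_add_one_le hM0 (w := 2 * R + 1) (by positivity) (by linarith)⟩
  set n := finrank ℚ K
  rw [Finset.mul_sum, ← Finset.sum_sub_distrib]
  refine (Finset.abs_sum_le_sum_abs _ _).trans (Finset.sum_le_sum fun P hP => ?_)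
  obtain ⟨hPY, hP⟩ := mem_primeIdeals.mp hP
  have hN : (0 : ℝ) < P.absNorm := by exact_mod_cast two_pos.trans_le (two_le_absNorm hP)
  have hcount := hM P hP.ne_zero R (by exact_mod_cast hPY)
  set N := (P.absNorm : ℝ)
  set k := ((pointsInBox b P.toAddSubgroup R).card : ℝ)
  have hlog : 0 ≤ Real.log N := Real.log_natCast_nonneg _
  have hdiv : |k - (2 * R + 1) ^ n / N| ≤
      M * (2 * R + 1) ^ (n - 1) * N ^ ((1 / n : ℝ) - 1) := by
    rw [Real.rpow_sub_one hN.ne', mul_div_assoc', le_div_iff₀ hN]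
    refine le_of_eq_of_le ?_ hcount
    rw [← abs_of_pos hN, ← abs_mul, abs_of_pos hN, sub_mul, div_mul_cancel₀ _ hN.ne', mul_comm k]
  calc |Real.log N * (k - 1) - (2 * R + 1) ^ n * (Real.log N / N)|
      = Real.log N * |k - (2 * R + 1) ^ n / N - 1| := by
        rw [← abs_of_nonneg hlog, ← abs_mul, abs_of_nonneg hlog]
        congr 1
        ring
    _ ≤ Real.log N * (|k - (2 * R + 1) ^ n / N| + |(1 : ℝ)|) := by gcongr; exact abs_sub _ _
    _ ≤ _ := by rw [abs_one]; gcongr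

theorem sum_card_pow_sub_one_le {M : ℝ} (hM0 : 0 ≤ M) (hM : ∀ I : Ideal (𝓞 K), I ≠ ⊥ → ∀ R : ℕ,
      ((pointsInBox b I.toAddSubgroup R).card - 1 : ℝ) * I.absNorm ≤
        M * (2 * R + 1) ^ finrank ℚ K) {P : Ideal (𝓞 K)} (hP : Prime P) (R Y : ℕ) :
    ∑ k ∈ Finset.Ico 2 Y, ((pointsInBox b (P ^ k).toAddSubgroup R).card - 1 : ℝ) ≤
      2 * M * (2 * R + 1) ^ finrank ℚ K / (P.absNorm : ℝ) ^ 2 := by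
  have hN : (2 : ℝ) ≤ P.absNorm := by exact_mod_cast two_le_absNorm hP
  have hinv : (P.absNorm : ℝ)⁻¹ ≤ 2⁻¹ := by gcongr
  calc ∑ k ∈ Finset.Ico 2 Y, ((pointsInBox b (P ^ k).toAddSubgroup R).card - 1 : ℝ)
      ≤ ∑ k ∈ Finset.Ico 2 Y, M * (2 * R + 1) ^ finrank ℚ K * (P.absNorm : ℝ)⁻¹ ^ k := by
        refine Finset.sum_le_sum fun k _ => ?_
        have h := hM (P ^ k) (pow_ne_zero k hP.ne_zero) R
        rw [map_pow, Nat.cast_pow] at h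
        rwa [inv_pow, ← div_eq_mul_inv, le_div_iff₀ (by positivity)]
    _ ≤ M * (2 * R + 1) ^ finrank ℚ K * ((P.absNorm : ℝ)⁻¹ ^ 2 / 2⁻¹) := by
        rw [← Finset.mul_sum]
        gcongr
        refine (geom_sum_Ico_le_of_lt_one (by positivity) (by linarith)).trans ?_
        gcongr
        linarith
    _ = _ := by field_simp

theorem exists_sum_log_mul_sum_card_pow_le : ∃ C : ℝ, ∀ R Y Z : ℕ,
    ∑ P ∈ primeIdeals K Y, Real.log P.absNorm *
        ∑ k ∈ Finset.Ico 2 Z, ((pointsInBox b (P ^ k).toAddSubgroup R).card - 1 : ℝ) ≤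
      C * (2 * R + 1) ^ finrank ℚ K := by
  obtain ⟨M, hM0, hM⟩ := exists_card_sub_one_mul_absNorm_le b
  refine ⟨2 * M * (finrank ℚ K * ∑' m : ℕ, vonMangoldt m / (m : ℝ) ^ 2), fun R Y Z => ?_⟩
  set w : ℝ := (2 * R + 1) ^ finrank ℚ K
  calc _ ≤ ∑ P ∈ primeIdeals K Y, 2 * M * w *
          (Real.log P.absNorm * ((P.absNorm : ℝ) ^ 2)⁻¹) := by
        refine Finset.sum_le_sum fun P hP => ?_
        refine (mul_le_mul_of_nonneg_left (sum_card_pow_sub_one_le b hM0 hM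
          (mem_primeIdeals.mp hP).2 R Z) (Real.log_natCast_nonneg _)).trans_eq ?_
        ring
    _ ≤ 2 * M * w * (finrank ℚ K * ∑ m ∈ Finset.Ioc 0 Y, vonMangoldt m * ((m : ℝ) ^ 2)⁻¹) := by
        rw [← Finset.mul_sum]
        gcongr
        exact sum_primeIdeals_le_sum_vonMangoldt Y (g := fun m => ((m : ℝ) ^ 2)⁻¹)
          fun m => by positivity
    _ ≤ 2 * M * w * (finrank ℚ K * ∑' m : ℕ, vonMangoldt m / (m : ℝ) ^ 2) := by
        simp only [← div_eq_mul_inv]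
        gcongr
        exact summable_vonMangoldt_div_sq.sum_le_tsum _ fun m _ =>
          div_nonneg ArithmeticFunction.vonMangoldt_nonneg (by positivity)
    _ = _ := by ring

variable (K)

theorem exists_abs_sum_log_absNorm_div_sub_mul_log_le : ∃ B : ℕ, 1 ≤ B ∧ ∃ C : ℝ, ∀ R : ℕ, 1 ≤ R →
    |∑ P ∈ primeIdeals K ((B * R) ^ finrank ℚ K), Real.log P.absNorm / P.absNorm -
      finrank ℚ K * Real.log R| ≤ C := by
  let b := RingOfIntegers.basis K
  obtain ⟨B, hB1, hB⟩ := exists_natAbs_norm_le b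
  obtain ⟨C₀, hC₀⟩ := exists_abs_sum_log_natAbs_norm_sub_le b
  obtain ⟨C₁, hC₁⟩ := exists_abs_sum_log_mul_card_sub_le b (B := B)
  obtain ⟨C₂, hC₂⟩ := exists_sum_log_mul_sum_card_pow_le b
  refine ⟨B, hB1, C₀ + C₁ + C₂, fun R hR => ?_⟩
  set n := finrank ℚ K
  set Y := (B * R) ^ n
  set w : ℝ := (2 * R + 1) ^ n
  have hw : 0 < w := by positivity
  have hYpos : 1 ≤ Y := Nat.one_le_pow _ _ (Nat.mul_pos hB1 hR)
  have hnonneg : 0 ≤ ∑ P ∈ primeIdeals K Y, Real.log P.absNorm *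
      ∑ k ∈ Finset.Ico 2 (Y + 1), ((pointsInBox b (P ^ k).toAddSubgroup R).card - 1 : ℝ) :=
    Finset.sum_nonneg fun P _ => mul_nonneg (Real.log_natCast_nonneg _) <|
      Finset.sum_nonneg fun k _ => sub_nonneg.mpr (by exact_mod_cast card_pointsInBox_pos b _ R)
  have hsplit : ∑ a ∈ latticeBox b R, Real.log (Algebra.norm ℤ a).natAbs =
      ∑ P ∈ primeIdeals K Y,
        Real.log P.absNorm * ((pointsInBox b P.toAddSubgroup R).card - 1) +
      ∑ P ∈ primeIdeals K Y, Real.log P.absNorm *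
        ∑ k ∈ Finset.Ico 2 (Y + 1), ((pointsInBox b (P ^ k).toAddSubgroup R).card - 1 : ℝ) := by
    rw [sum_log_natAbs_norm_eq (hB R), ← Finset.sum_add_distrib]
    refine Finset.sum_congr rfl fun P _ => ?_
    rw [← Finset.mul_sum, ← Finset.Ico_add_one_right_eq_Icc,
      Finset.sum_eq_sum_Ico_succ_bot (by simpa),
      pow_one, mul_add]
  have h0 := abs_le.mp (hC₀ R hR)
  have h1 := abs_le.mp (hC₁ R)
  have h2 := hC₂ R Y (Y + 1)
  have hmain : |w * (∑ P ∈ primeIdeals K Y, Real.log P.absNorm / P.absNorm - n * Real.log R)| ≤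
      w * (C₀ + C₁ + C₂) := by
    rw [abs_le]
    constructor <;> linarith
  rwa [abs_mul, abs_of_pos hw, mul_le_mul_iff_right₀ hw] at hmain

theorem exists_abs_sum_log_absNorm_div_sub_log_le : ∃ C : ℝ, ∀ x : ℝ, 1 ≤ x →
    |∑ P ∈ primeIdeals K ⌊x⌋₊, Real.log P.absNorm / P.absNorm - Real.log x| ≤ C := by
  obtain ⟨B, hB1, C, hC⟩ := exists_abs_sum_log_absNorm_div_sub_mul_log_le K
  have hnonneg : ∀ P : Ideal (𝓞 K), 0 ≤ Real.log P.absNorm / P.absNorm := fun P =>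
    div_nonneg (Real.log_natCast_nonneg _) (Nat.cast_nonneg _)
  exact exists_abs_map_floor_sub_log_le
    (φ := fun Y => ∑ P ∈ primeIdeals K Y, Real.log P.absNorm / P.absNorm)
    (fun Y Z h => Finset.sum_le_sum_of_subset_of_nonneg (primeIdeals_mono h) fun P _ _ => hnonneg P)
    (fun Y => Finset.sum_nonneg fun P _ => hnonneg P) finrank_pos.ne' hB1 hC

end Mertens

section DegreeOnePrimes

open ArithmeticFunction (vonMangoldt)

variable (K : Type*) [Field K] [NumberField K]

/-- The number of ideals of norm `m` in `𝓞 K`; for `m` prime these are the primes of degree one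
above `m`. -/
noncomputable def idealCount (m : ℕ) : ℕ :=
  (Ideal.finite_setOfPred_absNorm_eq (S := 𝓞 K) m).toFinset.card

variable {K} in
theorem prime_of_prime_absNorm {P : Ideal (𝓞 K)} (hP : P.absNorm.Prime) : Prime P := by
  refine Ideal.prime_of_isPrime ?_ (Ideal.isPrime_of_irreducible_absNorm hP)
  rintro rfl
  exact hP.ne_zero Ideal.absNorm_bot

theorem idealCount_le_finrank {p : ℕ} (hp : p.Prime) : idealCount K p ≤ finrank ℚ K := by
  refine (mul_one _).ge.trans (card_mul_le_finrank hp fun P hP => ?_)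
  have hP : P.absNorm = p := by simpa using hP
  exact ⟨prime_of_prime_absNorm (hP ▸ hp), by rw [hP, pow_one]⟩

theorem sum_primeIdeals_prime_absNorm (Y : ℕ) :
    ∑ P ∈ primeIdeals K Y with P.absNorm.Prime, Real.log P.absNorm / P.absNorm =
      ∑ p ∈ Finset.range (Y + 1) with p.Prime, idealCount K p * (Real.log p / p) := by
  have hmaps : ∀ P ∈ (primeIdeals K Y).filter (·.absNorm.Prime),
      P.absNorm ∈ (Finset.range (Y + 1)).filter Nat.Prime := by
    simp +contextual [mem_primeIdeals]
  rw [← Finset.sum_fiberwise_of_maps_to hmaps]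
  refine Finset.sum_congr rfl fun p hp => ?_
  obtain ⟨hpY, hp⟩ := Finset.mem_filter.mp hp
  have hfiber : {P ∈ {P ∈ primeIdeals K Y | P.absNorm.Prime} | P.absNorm = p} =
      (Ideal.finite_setOfPred_absNorm_eq (S := 𝓞 K) p).toFinset := by
    ext P
    simp only [Finset.mem_filter, mem_primeIdeals, Set.Finite.mem_toFinset, Set.mem_ofPred_eq]
    refine ⟨And.right, ?_⟩
    rintro rfl
    exact ⟨⟨⟨Nat.lt_succ_iff.mp (Finset.mem_range.mp hpY), prime_of_prime_absNorm hp⟩, hp⟩, rfl⟩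
  rw [Finset.sum_congr rfl fun P hP => by rw [(Finset.mem_filter.mp hP).2], hfiber,
    Finset.sum_const, nsmul_eq_mul, idealCount]

theorem exists_sum_primeIdeals_not_prime_absNorm_le : ∃ C : ℝ, ∀ Y : ℕ,
    ∑ P ∈ primeIdeals K Y with ¬ P.absNorm.Prime, Real.log P.absNorm / P.absNorm ≤ C := by
  have hsummable : Summable fun m : ℕ => vonMangoldt m * if m.Prime then 0 else (m : ℝ)⁻¹ := by
    refine (ArithmeticFunction.vonMangoldt.summable_residueClass_non_primes_div
      (q := 1) 0).congr fun m => ?_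
    have hm : ArithmeticFunction.vonMangoldt.residueClass (q := 1) 0 m = vonMangoldt m :=
      Set.indicator_of_mem (s := {n : ℕ | (n : ZMod 1) = 0}) (Subsingleton.elim _ _) _
    rw [hm]
    split_ifs <;> simp [div_eq_mul_inv]
  have hnonneg : ∀ m : ℕ, (0 : ℝ) ≤ if m.Prime then 0 else (m : ℝ)⁻¹ := fun m => by positivity
  refine ⟨finrank ℚ K * ∑' m : ℕ, vonMangoldt m * if m.Prime then 0 else (m : ℝ)⁻¹, fun Y => ?_⟩
  calc _ = ∑ P ∈ primeIdeals K Y, Real.log P.absNorm *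
          if P.absNorm.Prime then 0 else (P.absNorm : ℝ)⁻¹ := by
        simp only [Finset.sum_filter, div_eq_mul_inv, ite_not, mul_ite, mul_zero]
    _ ≤ finrank ℚ K * ∑ m ∈ Finset.Ioc 0 Y, vonMangoldt m * if m.Prime then 0 else (m : ℝ)⁻¹ :=
        sum_primeIdeals_le_sum_vonMangoldt Y hnonneg
    _ ≤ _ := by
        gcongr
        exact hsummable.sum_le_tsum _ fun m _ =>
          mul_nonneg ArithmeticFunction.vonMangoldt_nonneg (hnonneg m)

theorem exists_abs_sum_idealCount_sub_log_le : ∃ C : ℝ, ∀ x : ℝ, 1 ≤ x →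
    |∑ p ∈ Finset.range (⌊x⌋₊ + 1) with p.Prime, idealCount K p * (Real.log p / p) -
      Real.log x| ≤ C := by
  obtain ⟨C, hC⟩ := exists_abs_sum_log_absNorm_div_sub_log_le K
  obtain ⟨C', hC'⟩ := exists_sum_primeIdeals_not_prime_absNorm_le K
  refine ⟨C + C', fun x hx => ?_⟩
  have hsplit := Finset.sum_filter_add_sum_filter_not (primeIdeals K ⌊x⌋₊) (·.absNorm.Prime)
    fun P => Real.log P.absNorm / P.absNorm
  have hnonneg : 0 ≤ ∑ P ∈ primeIdeals K ⌊x⌋₊ with ¬ P.absNorm.Prime,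
      Real.log P.absNorm / P.absNorm :=
    Finset.sum_nonneg fun P _ => div_nonneg (Real.log_natCast_nonneg _) (Nat.cast_nonneg _)
  rw [← sum_primeIdeals_prime_absNorm, abs_le]
  have h := abs_le.mp (hC x hx)
  have h' := hC' ⌊x⌋₊
  constructor <;> linarith

theorem summable_sub_idealCount_mul_log_div {u : ℕ → ℕ}
    (hu : ∀ᶠ p in Filter.atTop, p.Prime → u p = idealCount K p) :
    Summable fun p : ℕ => if p.Prime then
      (u p : ℝ) * Real.log p / ((p : ℝ) - 1) - idealCount K p * (Real.log p / p) else 0 := by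
  refine Summable.of_norm_bounded_eventually_nat
    (g := fun p => finrank ℚ K * (2 * (Real.log p / (p : ℝ) ^ 2)))
    ((summable_log_div_sq.mul_left 2).mul_left _) ?_
  filter_upwards [hu] with p hup
  split_ifs with hp
  · have hp2 : (2 : ℝ) ≤ p := by exact_mod_cast hp.two_le
    have hp1 : 0 < (p : ℝ) - 1 := by linarith
    have hdiff : (u p : ℝ) * Real.log p / ((p : ℝ) - 1) - idealCount K p * (Real.log p / p) =
        idealCount K p * (Real.log p / (p * (p - 1))) := by
      rw [hup hp]
      field_simp
      ring
    have hle : Real.log p / (p * (p - 1)) ≤ 2 * (Real.log p / (p : ℝ) ^ 2) := by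
      rw [← mul_div_assoc, div_le_div_iff₀ (by positivity) (by positivity)]
      nlinarith [mul_nonneg (Real.log_natCast_nonneg p) (by nlinarith : 0 ≤ (p : ℝ) * (p - 2))]
    rw [hdiff, Real.norm_of_nonneg (by positivity)]
    gcongr
    exact idealCount_le_finrank K hp
  · rw [norm_zero]
    positivity

theorem exists_abs_sum_sub_idealCount_mul_log_div_le {u : ℕ → ℕ}
    (hu : ∀ᶠ p in Filter.atTop, p.Prime → u p = idealCount K p) :
    ∃ C : ℝ, ∀ N : ℕ, |∑ p ∈ Finset.range N with p.Prime,
      ((u p : ℝ) * Real.log p / ((p : ℝ) - 1) - idealCount K p * (Real.log p / p))| ≤ C := by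
  have hsummable := (summable_sub_idealCount_mul_log_div K hu).abs
  exact ⟨_, fun N => (congrArg _ (Finset.sum_filter _ _)).trans_le <|
    (Finset.abs_sum_le_sum_abs _ _).trans (hsummable.sum_le_tsum _ fun _ _ => abs_nonneg _)⟩

end DegreeOnePrimes

section KummerDedekind

variable {K : Type*} [Field K] {θ : 𝓞 K}

theorem mem_adjoin_int_of_coe_mem {y : 𝓞 K} (h : (y : K) ∈ Algebra.adjoin ℤ {(θ : K)}) :
    y ∈ Algebra.adjoin ℤ {θ} := by
  have hmap : (Algebra.adjoin ℤ {θ}).map (IsScalarTower.toAlgHom ℤ (𝓞 K) K) =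
      Algebra.adjoin ℤ {(θ : K)} :=
    AlgHom.map_adjoin_singleton _ _
  obtain ⟨z, hz, hzy⟩ := hmap ▸ h
  exact RingOfIntegers.coe_injective hzy ▸ hz

variable {p : ℕ} [Fact p.Prime]

theorem mem_monicFactorsMod_iff {Q : (ZMod p)[X]} :
    Q ∈ RingOfIntegers.monicFactorsMod θ p ↔
      Irreducible Q ∧ Q.Monic ∧ Q ∣ (minpoly ℤ θ).map (Int.castRingHom (ZMod p)) := by
  rw [Multiset.mem_toFinset,
    Polynomial.mem_normalizedFactors_iff (map_monic_ne_zero (minpoly.monic θ.isIntegral))]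

theorem X_sub_C_mem_monicFactorsMod_iff {a : ZMod p} :
    X - C a ∈ RingOfIntegers.monicFactorsMod θ p ↔
      a ∈ ((minpoly ℤ θ).map (Int.castRingHom (ZMod p))).roots.toFinset := by
  rw [mem_monicFactorsMod_iff, Multiset.mem_toFinset,
    mem_roots (map_monic_ne_zero (minpoly.monic θ.isIntegral)), ← dvd_iff_isRoot]
  exact ⟨fun h => h.2.2, fun h => ⟨irreducible_X_sub_C a, monic_X_sub_C a, h⟩⟩

variable [NumberField K]

theorem exists_intCast_mem_conductor (hθ : Algebra.adjoin ℚ {(θ : K)} = ⊤) :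
    ∃ d : ℤ, d ≠ 0 ∧ (d : 𝓞 K) ∈ conductor ℤ θ := by
  have hint : IsIntegral ℤ (θ : K) := θ.isIntegral_coe
  let pb : PowerBasis ℚ K := PowerBasis.ofAdjoinEqTop' (hint.tower_top (A := ℚ)) hθ
  have hgen : pb.gen = θ := PowerBasis.ofAdjoinEqTop'_gen _ _
  have hdiscr : IsIntegral ℤ (Algebra.discr ℚ pb.basis) :=
    Algebra.discr_isIntegral ℚ fun i => by
      rw [pb.basis_eq_pow, hgen]
      exact hint.pow _
  obtain ⟨d, hd⟩ := IsIntegrallyClosed.isIntegral_iff.mp hdiscr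
  refine ⟨d, ?_, fun b => mem_adjoin_int_of_coe_mem ?_⟩
  · rintro rfl
    exact Algebra.discr_not_zero_of_basis ℚ pb.basis (by simpa using hd.symm)
  · have h := Algebra.discr_mul_isIntegral_mem_adjoin (R := ℤ) ℚ (B := pb) (hgen ▸ hint)
      b.isIntegral_coe
    rw [hgen, ← hd, algebraMap_smul, zsmul_eq_mul] at h
    simpa using h

theorem exponent_ne_zero (hθ : Algebra.adjoin ℚ {(θ : K)} = ⊤) :
    RingOfIntegers.exponent θ ≠ 0 := by
  obtain ⟨d, hd0, hd⟩ := exists_intCast_mem_conductor hθ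
  rw [RingOfIntegers.exponent, Ne, Ideal.absNorm_eq_zero_iff]
  exact Submodule.ne_bot_iff _ |>.mpr ⟨d, by simpa [Ideal.mem_comap] using hd, hd0⟩

theorem liesOver_span_of_absNorm_eq {P : Ideal (𝓞 K)}
    (hP : P.absNorm = p) : P.LiesOver (Ideal.span {(p : ℤ)}) := by
  have hprime : P.IsPrime :=
    Ideal.isPrime_of_prime (prime_of_prime_absNorm (hP ▸ Fact.out))
  have hmem : (p : ℤ) ∈ P.under ℤ := by
    simpa [Ideal.mem_comap, hP] using Ideal.absNorm_mem P
  exact ⟨(Int.ideal_span_isMaximal_of_prime p).eq_of_le (hprime.under ℤ).ne_top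
    ((Ideal.span_singleton_le_iff_mem _).mpr hmem)⟩

theorem absNorm_primesOverSpanEquivMonicFactorsMod_symm (hp : ¬ p ∣ RingOfIntegers.exponent θ)
    (Q : RingOfIntegers.monicFactorsMod θ p) :
    ((Ideal.primesOverSpanEquivMonicFactorsMod hp).symm Q : Ideal (𝓞 K)).absNorm =
      p ^ (Q : (ZMod p)[X]).natDegree := by
  set P := (Ideal.primesOverSpanEquivMonicFactorsMod hp).symm Q
  have := P.2.1
  have := P.2.2
  have h := Ideal.absNorm_pow_inertiaDeg (Ideal.span {(p : ℤ)}) (P : Ideal (𝓞 K))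
  rw [Ideal.inertiaDeg_primesOverSpanEquivMonicFactorsMod_symm_apply' hp Q.2] at h
  simpa using h.symm

theorem exists_eq_primesOverSpanEquivMonicFactorsMod_symm_X_sub_C
    (hp : ¬ p ∣ RingOfIntegers.exponent θ) {P : Ideal (𝓞 K)} (hP : P.absNorm = p) :
    ∃ (a : ZMod p) (ha : X - C a ∈ RingOfIntegers.monicFactorsMod θ p),
      P = (Ideal.primesOverSpanEquivMonicFactorsMod hp).symm ⟨X - C a, ha⟩ := by
  have hpp : p.Prime := Fact.out
  obtain ⟨Q, hQ⟩ := (Ideal.primesOverSpanEquivMonicFactorsMod hp).symm.surjective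
    ⟨P, Ideal.isPrime_of_prime (prime_of_prime_absNorm (hP ▸ hpp)), liesOver_span_of_absNorm_eq hP⟩
  have hdeg : (Q : (ZMod p)[X]).natDegree = 1 := by
    have h := absNorm_primesOverSpanEquivMonicFactorsMod_symm hp Q
    rw [hQ, hP] at h
    exact Nat.pow_right_injective hpp.two_le (h.symm.trans (pow_one p).symm)
  have hQX : (Q : (ZMod p)[X]) = X - C (-(Q : (ZMod p)[X]).coeff 0) := by
    rw [map_neg, sub_neg_eq_add]
    exact (mem_monicFactorsMod_iff.mp Q.2).2.1.eq_X_add_C hdeg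
  exact ⟨_, hQX ▸ Q.2, by simp only [← hQX, Subtype.coe_eta, hQ]⟩

theorem idealCount_eq_card_roots (hp : ¬ p ∣ RingOfIntegers.exponent θ) :
    idealCount K p = ((minpoly ℤ θ).map (Int.castRingHom (ZMod p))).roots.toFinset.card := by
  refine (Finset.card_bij (fun a ha => ((Ideal.primesOverSpanEquivMonicFactorsMod hp).symm
    ⟨X - C a, X_sub_C_mem_monicFactorsMod_iff.mpr ha⟩ : Ideal (𝓞 K))) ?_ ?_ ?_).symm
  · intro a ha
    simp [absNorm_primesOverSpanEquivMonicFactorsMod_symm]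
  · intro a ha b hb hab
    simpa using (Ideal.primesOverSpanEquivMonicFactorsMod hp).symm.injective (Subtype.ext hab)
  · intro P hP
    obtain ⟨a, ha, rfl⟩ := exists_eq_primesOverSpanEquivMonicFactorsMod_symm_X_sub_C hp
      (by simpa using hP)
    exact ⟨a, X_sub_C_mem_monicFactorsMod_iff.mp ha, rfl⟩

end KummerDedekind

section Roots

theorem isRoot_map_intCast_iff {f : ℤ[X]} {p : ℕ} {a : ℤ} :
    (f.map (Int.castRingHom (ZMod p))).IsRoot (a : ZMod p) ↔ (p : ℤ) ∣ f.eval a := by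
  rw [IsRoot.def, ← eq_intCast (Int.castRingHom (ZMod p)), eval_map_apply, eq_intCast,
    ZMod.intCast_zmod_eq_zero_iff_dvd]

theorem coprime_of_dvd_eval {f : ℤ[X]} {p : ℕ} (hp : p.Prime) (h0 : ¬ (p : ℤ) ∣ f.coeff 0) {a : ℕ}
    (ha : (p : ℤ) ∣ f.eval (a : ℤ)) : a.Coprime p := by
  rw [Nat.coprime_comm, hp.coprime_iff_not_dvd]
  intro hdvd
  have hsub : (a : ℤ) ∣ f.eval (a : ℤ) - f.coeff 0 := by
    simpa [coeff_zero_eq_eval_zero] using sub_dvd_eval_sub (a : ℤ) 0 f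
  exact h0 ((Int.dvd_iff_dvd_of_dvd_sub ((Int.natCast_dvd_natCast.mpr hdvd).trans hsub)).mp ha)

theorem nu1_eq_card_roots {f : ℤ[X]} {p : ℕ} [Fact p.Prime] (h0 : ¬ (p : ℤ) ∣ f.coeff 0) :
    nu1 f p = (f.map (Int.castRingHom (ZMod p))).roots.toFinset.card := by
  have hf0 : f.map (Int.castRingHom (ZMod p)) ≠ 0 := fun h =>
    h0 ((ZMod.intCast_zmod_eq_zero_iff_dvd _ _).mp (by simpa using congrArg (coeff · 0) h))
  refine Finset.card_nbij' (fun a => (a : ZMod p)) ZMod.val ?_ ?_ ?_ ?_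
  · intro a ha
    have ha := (Finset.mem_filter.mp ha).2.2
    simpa [hf0] using isRoot_map_intCast_iff.mpr ha
  · intro b hb
    have hb : (p : ℤ) ∣ f.eval (b.val : ℤ) :=
      isRoot_map_intCast_iff.mp (by simpa [hf0] using hb)
    exact Finset.mem_filter.mpr
      ⟨Finset.mem_range.mpr b.val_lt, coprime_of_dvd_eval Fact.out h0 hb, hb⟩
  · intro a ha
    exact ZMod.val_cast_of_lt (Finset.mem_range.mp (Finset.mem_filter.mp ha).1)
  · intro b _
    exact ZMod.natCast_zmod_val b

theorem card_roots_integralNormalization {R F : Type*} [CommRing R] [Field F] [DecidableEq F]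
    {f : R[X]} (φ : R →+* F) (hdeg : 1 ≤ f.natDegree) (hc : φ f.leadingCoeff ≠ 0) :
    (f.integralNormalization.map φ).roots.toFinset.card = (f.map φ).roots.toFinset.card := by
  have hf : f ≠ 0 := ne_zero_of_natDegree_gt hdeg
  have hf0 : f.map φ ≠ 0 := fun h => hc (by simpa using congrArg (coeff · f.natDegree) h)
  have hg0 : f.integralNormalization.map φ ≠ 0 :=
    map_monic_ne_zero (monic_integralNormalization hf)
  have hiff : ∀ x, (f.integralNormalization.map φ).IsRoot (φ f.leadingCoeff * x) ↔
      (f.map φ).IsRoot x := by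
    intro x
    rw [IsRoot.def, IsRoot.def, eval_map, eval_map,
      integralNormalization_eval₂_leadingCoeff_mul hdeg, mul_eq_zero,
      or_iff_right (pow_ne_zero _ hc)]
  symm
  refine Finset.card_nbij' (φ f.leadingCoeff * ·) ((φ f.leadingCoeff)⁻¹ * ·) ?_ ?_
    (fun x _ => inv_mul_cancel_left₀ hc x) (fun y _ => mul_inv_cancel_left₀ hc y)
  · intro x hx
    rw [Finset.mem_coe, Multiset.mem_toFinset, mem_roots hf0] at hx
    exact Multiset.mem_toFinset.mpr ((mem_roots hg0).mpr ((hiff x).mpr hx))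
  · intro y hy
    rw [Finset.mem_coe, Multiset.mem_toFinset, mem_roots hg0, ← mul_inv_cancel_left₀ hc y,
      hiff] at hy
    exact Multiset.mem_toFinset.mpr ((mem_roots hf0).mpr hy)

theorem minpoly_eq_of_natDegree_le_finrank {K : Type*} [Field K] [NumberField K] {θ : 𝓞 K}
    (hθ : Algebra.adjoin ℚ {(θ : K)} = ⊤) {g : ℤ[X]} (hg : g.Monic) (hroot : aeval θ g = 0)
    (hdeg : g.natDegree ≤ finrank ℚ K) : minpoly ℤ θ = g := by
  refine (eq_of_monic_of_dvd_of_natDegree_le (minpoly.monic θ.isIntegral) hg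
    (minpoly.isIntegrallyClosed_dvd θ.isIntegral hroot) (hdeg.trans_eq ?_)).symm
  have hprim : IntermediateField.adjoin ℚ {(θ : K)} = ⊤ :=
    IntermediateField.adjoin_eq_top_iff.mpr hθ
  rw [← (Field.primitive_element_iff_minpoly_natDegree_eq ℚ (θ : K)).mp hprim,
    minpoly.isIntegrallyClosed_eq_field_fractions ℚ K θ.isIntegral,
    (minpoly.monic θ.isIntegral).natDegree_map]

theorem exists_minpoly_eq_integralNormalization {f : ℤ[X]} (hirr : Irreducible f)
    (hdeg : 1 ≤ f.natDegree) : ∃ (K : Type) (_ : Field K) (_ : NumberField K) (θ : 𝓞 K),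
      Algebra.adjoin ℚ {(θ : K)} = ⊤ ∧ minpoly ℤ θ = f.integralNormalization := by
  set F : ℚ[X] := f.map (algebraMap ℤ ℚ) with hF
  have hFirr : Irreducible F := (IsPrimitive.Int.irreducible_iff_irreducible_map_cast
    (hirr.isPrimitive (Nat.one_le_iff_ne_zero.mp hdeg))).mp hirr
  have : Fact (Irreducible F) := ⟨hFirr⟩
  let K := AdjoinRoot F
  let pb : PowerBasis ℚ K := AdjoinRoot.powerBasis hFirr.ne_zero
  have : FiniteDimensional ℚ K := pb.finite
  have : NumberField K := ⟨⟩
  have hc : (f.leadingCoeff : K) ≠ 0 := by simpa using hirr.ne_zero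
  have hmonic := monic_integralNormalization hirr.ne_zero
  have hα : aeval pb.gen f = 0 := by
    rw [← aeval_map_algebraMap ℚ, ← hF, AdjoinRoot.powerBasis_gen]
    exact (AdjoinRoot.aeval_eq F).trans AdjoinRoot.mk_self
  have hroot : aeval ((f.leadingCoeff : K) * pb.gen) f.integralNormalization = 0 := by
    simpa using integralNormalization_aeval_eq_zero hα fun x hx => by simpa using hx
  let θ : 𝓞 K := ⟨f.leadingCoeff * pb.gen, _, hmonic, hroot⟩
  have hgen : (f.leadingCoeff : ℚ)⁻¹ • (θ : K) = pb.gen := by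
    rw [Algebra.smul_def, map_inv₀, map_intCast]
    exact inv_mul_cancel_left₀ hc pb.gen
  have hθ : Algebra.adjoin ℚ {(θ : K)} = ⊤ :=
    PowerBasis.adjoin_eq_top_of_gen_mem_adjoin (B := pb)
      (hgen ▸ Subalgebra.smul_mem _ (Algebra.self_mem_adjoin_singleton ℚ (θ : K)) _)
  refine ⟨K, inferInstance, inferInstance, θ, hθ,
    minpoly_eq_of_natDegree_le_finrank hθ hmonic ?_ ?_⟩
  · refine RingOfIntegers.coe_injective ?_
    rw [← aeval_algebraMap_apply, map_zero]
    exact hroot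
  · rw [pb.finrank, AdjoinRoot.powerBasis_dim, natDegree_integralNormalization, hF,
      natDegree_map_eq_of_injective (RingHom.injective_int _)]

theorem exists_eventually_nu1_eq_idealCount {f : ℤ[X]} (hirr : Irreducible f)
    (hdeg : 1 ≤ f.natDegree) (hconst : f.coeff 0 ≠ 0) :
    ∃ (K : Type) (_ : Field K) (_ : NumberField K),
      ∀ᶠ p in Filter.atTop, p.Prime → nu1 f p = idealCount K p := by
  obtain ⟨K, _, _, θ, hθ, hmin⟩ := exists_minpoly_eq_integralNormalization hirr hdeg
  refine ⟨K, inferInstance, inferInstance, ?_⟩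
  have not_dvd_of_lt {n : ℤ} {p : ℕ} (hn : n ≠ 0) (hp : n.natAbs < p) : ¬ (p : ℤ) ∣ n := fun h =>
    (Nat.le_of_dvd (Int.natAbs_pos.mpr hn) (Int.natCast_dvd.mp h)).not_gt hp
  filter_upwards [Filter.eventually_gt_atTop (f.coeff 0).natAbs,
    Filter.eventually_gt_atTop f.leadingCoeff.natAbs,
    Filter.eventually_gt_atTop (RingOfIntegers.exponent θ)] with p h0 hc he hp
  have : Fact p.Prime := ⟨hp⟩
  have hpe : ¬ p ∣ RingOfIntegers.exponent θ := fun h =>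
    (Nat.le_of_dvd (exponent_ne_zero hθ).bot_lt h).not_gt he
  rw [nu1_eq_card_roots (not_dvd_of_lt hconst h0), idealCount_eq_card_roots hpe, hmin,
    card_roots_integralNormalization _ hdeg]
  rw [eq_intCast, Ne, ZMod.intCast_zmod_eq_zero_iff_dvd]
  exact not_dvd_of_lt (leadingCoeff_ne_zero.mpr hirr.ne_zero) hc

end Roots

end PrimeIdealMertens

open PrimeIdealMertens in
theorem nu1_sum_asymptotic (f : Polynomial ℤ) (hirr : Irreducible f)
    (hdeg : 1 ≤ f.natDegree) (hconst : f.coeff 0 ≠ 0) :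
    ∃ C : ℝ, ∀ x : ℝ, 2 ≤ x →
      |(∑ p ∈ (Finset.range (⌊x⌋₊ + 1)).filter Nat.Prime,
          (nu1 f p : ℝ) * Real.log p / ((p : ℝ) - 1)) - Real.log x| ≤ C := by
  obtain ⟨K, _, _, hν⟩ := exists_eventually_nu1_eq_idealCount hirr hdeg hconst
  obtain ⟨C, hC⟩ := exists_abs_sum_idealCount_sub_log_le K
  obtain ⟨D, hD⟩ := exists_abs_sum_sub_idealCount_mul_log_div_le K hν
  refine ⟨D + C, fun x hx => ?_⟩
  calc _ = |∑ p ∈ Finset.range (⌊x⌋₊ + 1) with p.Prime,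
          ((nu1 f p : ℝ) * Real.log p / ((p : ℝ) - 1) - idealCount K p * (Real.log p / p)) +
        (∑ p ∈ Finset.range (⌊x⌋₊ + 1) with p.Prime, idealCount K p * (Real.log p / p) -
          Real.log x)| := by
        rw [Finset.sum_sub_distrib, sub_add_sub_cancel]
    _ ≤ _ := abs_add_le _ _
    _ ≤ D + C := add_le_add (hD _) (hC x (by linarith))
end

section
/- There exists a constant C (depending only on f) such that for all x ≥ 2, |∑_{p ≤ x, p prime} ν₂(p)·log p/p − 2·log x| ≤ C. -/
open Polynomial

/-- ν₂(d) = #{a mod d : a·f(a) ≡ 0 (mod d)} -/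
def nu2 (f : Polynomial ℤ) (d : ℕ) : ℕ :=
  ((Finset.range d).filter (fun a : ℕ => (d : ℤ) ∣ (a : ℤ) * f.eval (a : ℤ))).card

/-! For `p ∤ f(0)` the congruences `a ≡ 0` and `f(a) ≡ 0` modulo `p` exclude each other, so
`ν₂(p)` is the number of roots of `X` plus the number of roots of `f`, and it suffices that the
number of roots of an irreducible polynomial modulo `p` is `1` on average, with weight
`log p / p`. By Dedekind's factorization theorem it is, for almost all `p`, the number of prime
ideals of norm `p` in a number field `K`, and prime ideals whose norm is not prime contribute
`O(1)`. So the claim is Mertens' first theorem for `K`: `∑ log N(v) / N(v) = log x + O(1)` over the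
prime ideals `v` with `N(v) ≤ x`.

This is proved as for `ℚ`, with a box of `Xⁿ` algebraic integers, all of norm of exact order `Xⁿ`,
in the role of the factors of `X!`. The sum of the logarithms of their norms is
`Xⁿ (n log X + O(1))`. Factoring each of them turns this sum into `∑ log N(v)`, where `v` is counted
once for each `k` and each element of the box in `vᵏ`. An ideal `I` contains
`Xⁿ / N(I) + O(Xⁿ⁻¹ N(I) ^ (1 / n - 1))` of the elements: by pigeonhole it has a nonzero element
with coordinates `O(N(I) ^ (1 / n))`, so that every class modulo `I` has a representative with
coordinates of that size.
-/

open Module Finset NumberField IsDedekindDomain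
open Ideal (absNorm)

section Lattice

variable {ι M : Type*} [Fintype ι] [AddCommGroup M] (b : Basis ι ℤ M)

lemma norm_map_le_sum_mul_norm_equivFun {E : Type*} [SeminormedAddCommGroup E] (L : M →+ E)
    (α : M) : ‖L α‖ ≤ (∑ i, ‖L (b i)‖) * ‖b.equivFun α‖ :=
  calc ‖L α‖ = ‖∑ i, b.equivFun α i • L (b i)‖ := by
        conv_lhs => rw [← b.sum_equivFun α]
        simp only [map_sum, map_zsmul]
    _ ≤ ∑ i, ‖L (b i)‖ * ‖b.equivFun α‖ := by
        refine norm_sum_le_of_le _ fun i _ ↦ (norm_zsmul_le _ _).trans ?_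
        rw [mul_comm]
        gcongr
        exact norm_le_pi_norm _ i
    _ = (∑ i, ‖L (b i)‖) * ‖b.equivFun α‖ := by rw [Finset.sum_mul]

lemma exists_mem_ne_zero_norm_equivFun_le {I : AddSubgroup M} {q : ℕ} (hI : I.index ≠ 0)
    (hq : I.index < (q + 1) ^ Fintype.card ι) :
    ∃ γ ∈ I, γ ≠ 0 ∧ ‖b.equivFun γ‖ ≤ q := by
  classical
  have : I.FiniteIndex := ⟨hI⟩
  have := Fintype.ofFinite (M ⧸ I)
  have hcard : Fintype.card (M ⧸ I) < Fintype.card (ι → Fin (q + 1)) := by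
    rw [← Nat.card_eq_fintype_card, ← AddSubgroup.index_eq_card]
    simpa using hq
  obtain ⟨x, y, hxy, h⟩ := Fintype.exists_ne_map_eq_of_card_lt
    (fun x : ι → Fin (q + 1) ↦ (b.equivFun.symm fun i ↦ ((x i : ℕ) : ℤ) : M ⧸ I)) hcard
  refine ⟨_, QuotientAddGroup.eq.mp h, fun h0 ↦ hxy ?_, ?_⟩
  · rw [neg_add_eq_zero, b.equivFun.symm.injective.eq_iff] at h0
    exact funext fun i ↦ Fin.ext (Nat.cast_injective (congrFun h0 i))
  · rw [pi_norm_le_iff_of_nonneg (Nat.cast_nonneg q)]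
    intro i
    simp only [map_add, map_neg, LinearEquiv.apply_symm_apply, Pi.add_apply, Pi.neg_apply,
      Int.norm_eq_abs]
    have hx : ((x i : ℕ) : ℤ) ≤ q := by exact_mod_cast Fin.is_le (x i)
    have hy : ((y i : ℕ) : ℤ) ≤ q := by exact_mod_cast Fin.is_le (y i)
    have : |-((x i : ℕ) : ℤ) + (y i : ℕ)| ≤ q := by rw [abs_le]; constructor <;> lia
    exact_mod_cast this

lemma exists_norm_equivFun_sub_nsmul_le (α : M) {N : ℕ} (hN : N ≠ 0) :
    ∃ β : M, ‖b.equivFun (α - N • β)‖ ≤ N := by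
  refine ⟨b.equivFun.symm fun i ↦ b.equivFun α i / N, ?_⟩
  rw [pi_norm_le_iff_of_nonneg (Nat.cast_nonneg N)]
  intro i
  have h0 := Int.emod_nonneg (b.equivFun α i) (b := (N : ℤ)) (by lia)
  have h1 := Int.emod_lt_of_pos (b.equivFun α i) (b := (N : ℤ)) (by lia)
  rw [map_sub, map_nsmul, LinearEquiv.apply_symm_apply, Pi.sub_apply, Pi.smul_apply,
    nsmul_eq_mul, ← Int.emod_def, Int.norm_eq_abs, abs_of_nonneg (by exact_mod_cast h0)]
  exact_mod_cast h1.le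

/-- The elements of `M` whose `i`-th coordinate lies in `[a i, a i + X)` for every `i`. -/
noncomputable def coordBox [DecidableEq ι] (a : ι → ℤ) (X : ℕ) : Finset M :=
  (Fintype.piFinset fun i ↦ Ico (a i) (a i + X)).map b.equivFun.symm.toEquiv.toEmbedding

variable [DecidableEq ι] {b} {a : ι → ℤ} {X ρ : ℕ}

lemma mem_coordBox {α : M} :
    α ∈ coordBox b a X ↔ ∀ i, a i ≤ b.equivFun α i ∧ b.equivFun α i < a i + X := by
  simp only [coordBox, mem_map_equiv, Fintype.mem_piFinset, mem_Ico]
  rfl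

variable (b a X) in
lemma card_coordBox : #(coordBox b a X) = X ^ Fintype.card ι := by
  simp [coordBox]

lemma add_mem_coordBox {α u : M} (hα : α ∈ coordBox b a X) (hu : ‖b.equivFun u‖ ≤ ρ) :
    α + u ∈ coordBox b (fun i ↦ a i - ρ) (X + 2 * ρ) := by
  rw [mem_coordBox] at hα ⊢
  intro i
  have hi : |b.equivFun u i| ≤ ρ := by
    exact_mod_cast (Int.norm_eq_abs _).symm.le.trans ((norm_le_pi_norm _ i).trans hu)
  simp only [map_add, Pi.add_apply]
  have := hα i
  rw [abs_le] at hi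
  constructor <;> push_cast <;> lia

open Classical in
lemma index_mul_card_coordBox_inter_le {I : AddSubgroup M}
    (hI : ∀ α, ∃ u, α - u ∈ I ∧ ‖b.equivFun u‖ ≤ ρ) :
    I.index * #{α ∈ coordBox b a X | α ∈ I} ≤ (X + 2 * ρ) ^ Fintype.card ι := by
  choose u hu hu' using fun c : M ⧸ I ↦ hI c.out
  have hmk (c : M ⧸ I) : (u c : M ⧸ I) = c := by
    rw [← (QuotientAddGroup.eq_iff_sub_mem.mpr (hu c)), QuotientAddGroup.out_eq']
  let e (z : (M ⧸ I) × {α // α ∈ ({α ∈ coordBox b a X | α ∈ I} : Finset M)}) :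
      coordBox b (fun i ↦ a i - ρ) (X + 2 * ρ) :=
    ⟨z.2 + u z.1, add_mem_coordBox (mem_filter.mp z.2.2).1 (hu' z.1)⟩
  have he : Function.Injective e := by
    rintro ⟨c, α, hα⟩ ⟨d, β, hβ⟩ h
    have h : α + u c = β + u d := congrArg Subtype.val h
    have hcd : c = d := by
      have h' := congrArg (QuotientAddGroup.mk (s := I)) h
      rwa [QuotientAddGroup.mk_add, QuotientAddGroup.mk_add, hmk, hmk,
        (QuotientAddGroup.eq_zero_iff α).mpr (mem_filter.mp hα).2,
        (QuotientAddGroup.eq_zero_iff β).mpr (mem_filter.mp hβ).2, zero_add, zero_add] at h'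
    subst hcd
    simpa using h
  simpa only [Nat.card_prod, ← AddSubgroup.index_eq_card, Nat.card_eq_fintype_card,
    Fintype.card_coe, card_coordBox] using Nat.card_le_card_of_injective e he

open Classical in
lemma pow_card_le_index_mul_card_coordBox_inter {I : AddSubgroup M} [I.FiniteIndex]
    (hI : ∀ α, ∃ u, α - u ∈ I ∧ ‖b.equivFun u‖ ≤ ρ) :
    X ^ Fintype.card ι ≤
      I.index * #{α ∈ coordBox b (fun i ↦ a i - ρ) (X + 2 * ρ) | α ∈ I} := by
  choose u hu hu' using fun c : M ⧸ I ↦ hI c.out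
  have hsub (α : M) : α - u α ∈ I := by
    rw [← QuotientAddGroup.eq_iff_sub_mem, ← QuotientAddGroup.eq_iff_sub_mem.mpr (hu α),
      QuotientAddGroup.out_eq']
  let e (α : coordBox b a X) : (M ⧸ I) ×
      {α // α ∈ ({α ∈ coordBox b (fun i ↦ a i - ρ) (X + 2 * ρ) | α ∈ I} : Finset M)} :=
    ⟨α.1, α.1 - u α.1, mem_filter.mpr ⟨by
      simpa only [sub_eq_add_neg] using
        add_mem_coordBox α.2 (u := -u α.1) (by simpa using hu' α.1), hsub α⟩⟩
  have he : Function.Injective e := by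
    intro α β h
    obtain ⟨h₁, h₂⟩ := Prod.ext_iff.mp h
    have h₂ : α.1 - u α.1 = β.1 - u β.1 := congrArg Subtype.val h₂
    have h₁ : (α.1 : M ⧸ I) = β.1 := h₁
    rw [h₁, sub_left_inj] at h₂
    exact Subtype.ext h₂
  simpa only [Nat.card_prod, ← AddSubgroup.index_eq_card, Nat.card_eq_fintype_card,
    Fintype.card_coe, card_coordBox] using Nat.card_le_card_of_injective e he

open Classical in
lemma sub_pow_card_le_index_mul_card_coordBox_inter [Nonempty ι] {I : AddSubgroup M}
    [I.FiniteIndex] (hI : ∀ α, ∃ u, α - u ∈ I ∧ ‖b.equivFun u‖ ≤ ρ) :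
    (X - 2 * ρ) ^ Fintype.card ι ≤ I.index * #{α ∈ coordBox b a X | α ∈ I} := by
  obtain hX | hX := le_total (2 * ρ) X
  · simpa [Nat.sub_add_cancel hX] using
      pow_card_le_index_mul_card_coordBox_inter (a := fun i ↦ a i + ρ) (X := X - 2 * ρ) hI
  · simp [Nat.sub_eq_zero_of_le hX]

open Classical in
lemma abs_index_mul_card_coordBox_inter_sub_le [Nonempty ι] {I : AddSubgroup M} [I.FiniteIndex]
    (hI : ∀ α, ∃ u, α - u ∈ I ∧ ‖b.equivFun u‖ ≤ ρ) :
    |(I.index * #{α ∈ coordBox b a X | α ∈ I} - X ^ Fintype.card ι : ℝ)| ≤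
      2 * ρ * Fintype.card ι * (X + 2 * ρ) ^ (Fintype.card ι - 1) := by
  set n := Fintype.card ι
  have hupper : (I.index * #{α ∈ coordBox b a X | α ∈ I} : ℝ) ≤ (X + 2 * ρ) ^ n := by
    exact_mod_cast index_mul_card_coordBox_inter_le hI
  have hlower : ((X - 2 * ρ : ℕ) : ℝ) ^ n ≤ I.index * #{α ∈ coordBox b a X | α ∈ I} := by
    exact_mod_cast sub_pow_card_le_index_mul_card_coordBox_inter hI
  have hpow {x y : ℝ} (hy : 0 ≤ y) (hyx : y ≤ x) (hxy : x - y ≤ 2 * ρ) (hx : x ≤ X + 2 * ρ) :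
      x ^ n - y ^ n ≤ 2 * ρ * n * (X + 2 * ρ) ^ (n - 1) := by
    refine (le_abs_self _).trans ((abs_pow_sub_pow_le _ _ _).trans ?_)
    rw [abs_of_nonneg (sub_nonneg.mpr hyx), abs_of_nonneg hy, abs_of_nonneg (hy.trans hyx),
      max_eq_left hyx]
    have := hy.trans hyx
    gcongr
  have hincr := hpow (x := X + 2 * ρ) (y := X) (by positivity) (by simp) (by simp) le_rfl
  have hdecr := hpow (x := X) (y := (X - 2 * ρ : ℕ)) (by positivity) (by simp)
    (by rw [sub_le_iff_le_add]; exact_mod_cast le_add_tsub) (by simp)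
  rw [abs_le]
  constructor <;> linarith

end Lattice

section CoordBoxOfRingOfIntegers

variable {K ι : Type*} [Field K] [NumberField K]

lemma absNorm_pos {I : Ideal (𝓞 K)} (hI : I ≠ ⊥) : 0 < absNorm I :=
  Nat.pos_of_ne_zero (Ideal.absNorm_eq_zero_iff.not.mpr hI)

lemma absNorm_le_of_dvd {I J : Ideal (𝓞 K)} (hJ : J ≠ ⊥) (h : I ∣ J) : absNorm I ≤ absNorm J :=
  Nat.le_of_dvd (absNorm_pos hJ) (map_dvd absNorm h)

variable [Fintype ι] (b : Basis ι ℤ (𝓞 K))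

include b

lemma card_basis_ringOfIntegers : Fintype.card ι = finrank ℚ K := by
  rw [← RingOfIntegers.rank, finrank_eq_card_basis b]

lemma card_basis_ringOfIntegers_ne_zero : Fintype.card ι ≠ 0 :=
  card_basis_ringOfIntegers b ▸ finrank_pos.ne'

omit [NumberField K] in
lemma exists_norm_equivFun_mul_le :
    ∃ W : ℕ, ∀ α β : 𝓞 K, ‖b.equivFun (α * β)‖ ≤ W * ‖b.equivFun α‖ * ‖b.equivFun β‖ := by
  obtain ⟨W, hW⟩ := exists_nat_ge (∑ i, ∑ j, ‖b.equivFun (b j * b i)‖)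
  refine ⟨W, fun α β ↦ ?_⟩
  calc ‖b.equivFun (α * β)‖ ≤ (∑ i, ‖b.equivFun (α * b i)‖) * ‖b.equivFun β‖ :=
        norm_map_le_sum_mul_norm_equivFun b
          ((b.equivFun : 𝓞 K →+ ι → ℤ).comp (AddMonoidHom.mulLeft α)) β
    _ ≤ (∑ i, (∑ j, ‖b.equivFun (b j * b i)‖) * ‖b.equivFun α‖) * ‖b.equivFun β‖ := by
        gcongr with i
        exact norm_map_le_sum_mul_norm_equivFun b
          ((b.equivFun : 𝓞 K →+ ι → ℤ).comp (AddMonoidHom.mulRight (b i))) α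
    _ ≤ W * ‖b.equivFun α‖ * ‖b.equivFun β‖ := by
        rw [← Finset.sum_mul]
        gcongr

lemma exists_short_representative :
    ∃ D : ℕ, ∀ (I : Ideal (𝓞 K)) (q : ℕ), I ≠ ⊥ → absNorm I < (q + 1) ^ Fintype.card ι →
      ∀ α, ∃ u, α - u ∈ I ∧ ‖b.equivFun u‖ ≤ D * q := by
  obtain ⟨W, hW⟩ := exists_norm_equivFun_mul_le b
  refine ⟨W, fun I q hI hq α ↦ ?_⟩
  obtain ⟨γ, hγI, hγ0, hγ⟩ := exists_mem_ne_zero_norm_equivFun_le b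
    (I := I.toAddSubgroup) (absNorm_pos hI).ne' hq
  have hN := (absNorm_pos (Ideal.span_singleton_eq_bot.not.mpr hγ0)).ne'
  obtain ⟨γ', hγ'⟩ := Ideal.mem_span_singleton.mp (Ideal.absNorm_mem (Ideal.span {γ}))
  set N := absNorm (Ideal.span {γ})
  -- `β` is the coordinatewise rounding of `α / γ`.
  obtain ⟨β, hβ⟩ := exists_norm_equivFun_sub_nsmul_le b (α * γ') hN
  refine ⟨α - γ * β, by simpa using I.mul_mem_right β hγI, ?_⟩
  have hmul : N • (α - γ * β) = γ * (α * γ' - N • β) := by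
    simp only [nsmul_eq_mul]
    linear_combination α * hγ'
  have hN' : (0 : ℝ) < N := by positivity
  refine le_of_mul_le_mul_left ?_ hN'
  calc N * ‖b.equivFun (α - γ * β)‖ = ‖b.equivFun (γ * (α * γ' - N • β))‖ := by
        rw [← hmul, map_nsmul, ← Nat.cast_smul_eq_nsmul ℤ, norm_smul, Int.norm_natCast]
    _ ≤ W * q * N := (hW _ _).trans (by gcongr)
    _ = N * (W * q) := by ring

lemma exists_norm_embedding_le :
    ∃ H : ℕ, ∀ (σ : K →ₐ[ℚ] ℂ) (α : 𝓞 K), ‖σ α‖ ≤ H * ‖b.equivFun α‖ := by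
  obtain ⟨H, hH⟩ := exists_nat_ge (∑ σ : K →ₐ[ℚ] ℂ, ∑ i, ‖σ (b i)‖)
  refine ⟨H, fun σ α ↦ (norm_map_le_sum_mul_norm_equivFun b
    ((σ : K →+ ℂ).comp (algebraMap (𝓞 K) K : 𝓞 K →+ K)) α).trans ?_⟩
  gcongr
  exact (single_le_sum (f := fun σ : K →ₐ[ℚ] ℂ ↦ ∑ i, ‖σ (b i)‖)
    (fun _ _ ↦ by positivity) (mem_univ σ)).trans hH

omit b [Fintype ι] in
lemma absNorm_span_singleton_eq_prod_norm_embeddings (α : 𝓞 K) :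
    (absNorm (Ideal.span {α}) : ℝ) = ∏ σ : K →ₐ[ℚ] ℂ, ‖σ α‖ := by
  rw [← norm_prod, ← Algebra.norm_eq_prod_embeddings ℚ ℂ (α : K), Ideal.absNorm_span_singleton,
    ← Algebra.coe_norm_int]
  simp [Nat.cast_natAbs]

variable [DecidableEq ι]

/- The box is based at a large integer multiple of `X`, to which all conjugates of its elements
are close. -/
lemma exists_coordBox_absNorm_bounds :
    ∃ T : ℝ, 1 ≤ T ∧ ∀ X : ℕ, ∃ a : ι → ℤ, ∀ α ∈ coordBox b a X,
      (X : ℝ) ^ Fintype.card ι ≤ absNorm (Ideal.span {α}) ∧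
      (absNorm (Ideal.span {α}) : ℝ) ≤ (T * X) ^ Fintype.card ι := by
  obtain ⟨H, hH⟩ := exists_norm_embedding_le b
  refine ⟨2 * H + 1, by simp, fun X ↦ ⟨b.equivFun (((H + 1) * X : ℕ) : 𝓞 K), fun α hα ↦ ?_⟩⟩
  have hclose (σ : K →ₐ[ℚ] ℂ) : ‖σ α - ((H + 1) * X : ℕ)‖ ≤ H * X := by
    have hcoord : ‖b.equivFun (α - ((H + 1) * X : ℕ))‖ ≤ X := by
      rw [pi_norm_le_iff_of_nonneg (Nat.cast_nonneg X)]
      intro i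
      have := mem_coordBox.mp hα i
      rw [map_sub, Pi.sub_apply, Int.norm_eq_abs, abs_of_nonneg (by exact_mod_cast (by lia))]
      exact_mod_cast (by lia)
    calc ‖σ α - ((H + 1) * X : ℕ)‖ = ‖σ (α - ((H + 1) * X : ℕ) : 𝓞 K)‖ := by simp
      _ ≤ H * X := (hH σ _).trans (by gcongr)
  have hnorm : ‖(((H + 1) * X : ℕ) : ℂ)‖ = (H + 1) * X := by
    rw [Complex.norm_natCast]; push_cast; rfl
  rw [absNorm_span_singleton_eq_prod_norm_embeddings, card_basis_ringOfIntegers b,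
    ← AlgHom.card ℚ K ℂ, Fintype.card, ← prod_const, ← prod_const]
  refine ⟨prod_le_prod (by simp) fun σ _ ↦ ?_, prod_le_prod (by simp) fun σ _ ↦ ?_⟩
  · have := norm_le_norm_add_norm_sub (σ α) (((H + 1) * X : ℕ) : ℂ)
    linarith [hclose σ]
  · have := norm_le_norm_add_norm_sub' (σ α) (((H + 1) * X : ℕ) : ℂ)
    linarith [hclose σ]

open Classical in
lemma exists_abs_card_coordBox_inter_sub_le {T : ℝ} (hT : 0 ≤ T) :
    ∃ C : ℝ, 0 ≤ C ∧ ∀ (I : Ideal (𝓞 K)) (a : ι → ℤ) (X : ℕ), I ≠ ⊥ →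
      (absNorm I : ℝ) ≤ (T * X) ^ Fintype.card ι →
      |(#{α ∈ coordBox b a X | α ∈ I} - X ^ Fintype.card ι / absNorm I : ℝ)| ≤
        C * X ^ (Fintype.card ι - 1) * (absNorm I : ℝ) ^ ((Fintype.card ι : ℝ)⁻¹ - 1) := by
  obtain ⟨D, hD⟩ := exists_short_representative b
  have := b.index_nonempty
  have hn := card_basis_ringOfIntegers_ne_zero b
  set n := Fintype.card ι
  refine ⟨2 * D * n * (1 + 2 * D * T) ^ (n - 1), by positivity, fun I a X hI hIX ↦ ?_⟩
  have hN : (0 : ℝ) < absNorm I := by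
    exact_mod_cast absNorm_pos hI
  set r := (absNorm I : ℝ) ^ (n : ℝ)⁻¹
  have hr : r ^ n = absNorm I := Real.rpow_inv_natCast_pow hN.le hn
  have hrX : r ≤ T * X := by
    rwa [← hr, pow_le_pow_iff_left₀ (by positivity) (by positivity) hn] at hIX
  have hq : absNorm I < (⌊r⌋₊ + 1) ^ n := by
    have := pow_lt_pow_left₀ (Nat.lt_floor_add_one r) (by positivity) hn
    exact_mod_cast hr ▸ this
  have hfin : I.toAddSubgroup.FiniteIndex := ⟨(absNorm_pos hI).ne'⟩
  have hcount := abs_index_mul_card_coordBox_inter_sub_le (b := b) (a := a) (X := X)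
    (ρ := D * ⌊r⌋₊) (I := I.toAddSubgroup) (by exact_mod_cast hD I ⌊r⌋₊ hI hq)
  have hρ : ((D * ⌊r⌋₊ : ℕ) : ℝ) ≤ D * r := by
    push_cast
    gcongr
    exact Nat.floor_le (by positivity)
  rw [Real.rpow_sub_one hN.ne', mul_div_assoc', le_div_iff₀ hN, ← abs_of_pos hN, ← abs_mul,
    abs_of_pos hN, sub_mul, div_mul_cancel₀ _ hN.ne', mul_comm (_ : ℝ) (absNorm I : ℝ)]
  calc _ ≤ 2 * ((D * ⌊r⌋₊ : ℕ) : ℝ) * n * (X + 2 * ((D * ⌊r⌋₊ : ℕ) : ℝ)) ^ (n - 1) := hcount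
    _ ≤ 2 * (D * r) * n * (X + 2 * (D * (T * X))) ^ (n - 1) := by gcongr; exact hρ.trans (by gcongr)
    _ = 2 * D * n * (1 + 2 * D * T) ^ (n - 1) * X ^ (n - 1) * r := by
        rw [show (X + 2 * (D * (T * X)) : ℝ) = (1 + 2 * D * T) * X by ring, mul_pow]
        ring

open Classical in
lemma exists_card_coordBox_inter_le {T : ℝ} (hT : 0 ≤ T) :
    ∃ C : ℝ, 0 ≤ C ∧ ∀ (I : Ideal (𝓞 K)) (a : ι → ℤ) (X : ℕ), I ≠ ⊥ →
      (∀ α ∈ coordBox b a X,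
        α ≠ 0 ∧ (absNorm (Ideal.span {α}) : ℝ) ≤ (T * X) ^ Fintype.card ι) →
      (#{α ∈ coordBox b a X | α ∈ I} : ℝ) ≤ C * (X ^ Fintype.card ι / absNorm I) := by
  obtain ⟨C, hC, hcount⟩ := exists_abs_card_coordBox_inter_sub_le b hT
  have hn := card_basis_ringOfIntegers_ne_zero b
  set n := Fintype.card ι
  refine ⟨1 + C * T, by positivity, fun I a X hI hbox ↦ ?_⟩
  obtain hempty | ⟨α, hα⟩ := ({α ∈ coordBox b a X | α ∈ I} : Finset (𝓞 K)).eq_empty_or_nonempty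
  · rw [hempty, card_empty, Nat.cast_zero]
    positivity
  obtain ⟨hα, hαI⟩ := mem_filter.mp hα
  have hIX : (absNorm I : ℝ) ≤ (T * X) ^ n := by
    refine le_trans ?_ (hbox α hα).2
    exact_mod_cast absNorm_le_of_dvd (Ideal.span_singleton_eq_bot.not.mpr (hbox α hα).1)
      (Ideal.dvd_span_singleton.mpr hαI)
  have hN : (0 : ℝ) < absNorm I := by
    exact_mod_cast absNorm_pos hI
  have hrX : (absNorm I : ℝ) ^ (n : ℝ)⁻¹ ≤ T * X := by
    rwa [Real.rpow_inv_le_iff_of_pos hN.le (by positivity) (by positivity), Real.rpow_natCast]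
  have herror : C * X ^ (n - 1) * (absNorm I : ℝ) ^ ((n : ℝ)⁻¹ - 1) ≤
      C * T * (X ^ n / absNorm I) := by
    rw [Real.rpow_sub_one hN.ne', ← pow_sub_one_mul hn (X : ℝ)]
    calc _ ≤ C * X ^ (n - 1) * (T * X / absNorm I) := by gcongr
      _ = _ := by ring
  linarith [(le_abs_self _).trans (hcount I a X hI hIX)]

end CoordBoxOfRingOfIntegers

section PrimeSums

variable {K : Type*} [Field K]

/-- The rational prime below a nonzero prime ideal of `𝓞 K`. -/
noncomputable def residueChar (v : HeightOneSpectrum (𝓞 K)) : ℕ :=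
  absNorm (v.asIdeal.under ℤ)

lemma residueChar_prime (v : HeightOneSpectrum (𝓞 K)) : (residueChar v).Prime :=
  have : NeZero v.asIdeal := ⟨v.ne_bot⟩
  Nat.absNorm_under_prime v.asIdeal

lemma residueChar_mem (v : HeightOneSpectrum (𝓞 K)) : (residueChar v : 𝓞 K) ∈ v.asIdeal :=
  Int.absNorm_under_mem v.asIdeal

variable [NumberField K]

lemma residueChar_le_absNorm (v : HeightOneSpectrum (𝓞 K)) :
    residueChar v ≤ absNorm v.asIdeal :=
  Nat.le_of_dvd (zero_lt_one.trans (HeightOneSpectrum.one_lt_absNorm v))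
    (Int.absNorm_under_dvd_absNorm v.asIdeal)

lemma exists_absNorm_eq_residueChar_pow (v : HeightOneSpectrum (𝓞 K)) :
    ∃ k ≠ 0, absNorm v.asIdeal = residueChar v ^ k := by
  have : v.asIdeal.LiesOver (Ideal.span {(residueChar v : ℤ)}) :=
    Int.liesOver_span_absNorm v.asIdeal
  have hN := Ideal.absNorm_eq_pow_inertiaDeg' (p := residueChar v) v.asIdeal (residueChar_prime v)
  refine ⟨_, fun h ↦ (HeightOneSpectrum.one_lt_absNorm v).ne' ?_, hN⟩
  rw [hN, h, pow_zero]

lemma two_le_absNorm (v : HeightOneSpectrum (𝓞 K)) : (2 : ℝ) ≤ absNorm v.asIdeal := by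
  exact_mod_cast HeightOneSpectrum.one_lt_absNorm v

lemma sum_log_absNorm_le_of_natCast_mem {S : Finset (HeightOneSpectrum (𝓞 K))} {m : ℕ}
    (hm : m ≠ 0) (hS : ∀ v ∈ S, (m : 𝓞 K) ∈ v.asIdeal) :
    ∑ v ∈ S, Real.log (absNorm v.asIdeal) ≤ finrank ℚ K * Real.log m := by
  classical
  have hdvd : ∏ v ∈ S, v.asIdeal ∣ Ideal.span {(m : 𝓞 K)} := by
    rw [← prod_image (g := HeightOneSpectrum.asIdeal) (f := fun P ↦ P)
      fun _ _ _ _ ↦ HeightOneSpectrum.ext]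
    refine prod_primes_dvd _ (fun P hP ↦ ?_) fun P hP ↦ ?_ <;>
      obtain ⟨v, hv, rfl⟩ := mem_image.mp hP
    exacts [v.prime, Ideal.dvd_span_singleton.mpr (hS v hv)]
  have hle : ∏ v ∈ S, absNorm v.asIdeal ≤ m ^ finrank ℚ K := by
    rw [← map_prod, ← RingOfIntegers.rank, ← Ideal.absNorm_span_natCast (S := 𝓞 K)]
    refine Nat.le_of_dvd ?_ (map_dvd _ hdvd)
    rw [Ideal.absNorm_span_natCast]
    positivity
  have hpos (v : HeightOneSpectrum (𝓞 K)) : (0 : ℝ) < absNorm v.asIdeal := by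
    linarith [two_le_absNorm v]
  rw [← Real.log_prod fun v _ ↦ (hpos v).ne', ← Real.log_pow]
  exact Real.log_le_log (prod_pos fun v _ ↦ hpos v) (by exact_mod_cast hle)

lemma sum_log_absNorm_mul_residueChar_le (S : Finset (HeightOneSpectrum (𝓞 K)))
    {g : ℕ → ℝ} (hg : ∀ p, 0 ≤ g p) :
    ∑ v ∈ S, Real.log (absNorm v.asIdeal) * g (residueChar v) ≤
      finrank ℚ K * ∑ p ∈ S.image residueChar, Real.log p * g p := by
  rw [← sum_fiberwise_of_maps_to fun v hv ↦ mem_image_of_mem residueChar hv, mul_sum]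
  refine sum_le_sum fun p hp ↦ ?_
  obtain ⟨w, -, rfl⟩ := mem_image.mp hp
  calc ∑ v ∈ S with residueChar v = residueChar w,
        Real.log (absNorm v.asIdeal) * g (residueChar v)
      = (∑ v ∈ S with residueChar v = residueChar w, Real.log (absNorm v.asIdeal)) *
          g (residueChar w) := by
        rw [sum_mul]
        exact sum_congr rfl fun v hv ↦ by rw [(mem_filter.mp hv).2]
    _ ≤ finrank ℚ K * Real.log (residueChar w) * g (residueChar w) := by
        refine mul_le_mul_of_nonneg_right
          (sum_log_absNorm_le_of_natCast_mem (residueChar_prime w).ne_zero fun v hv ↦ ?_) (hg _)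
        exact (mem_filter.mp hv).2 ▸ residueChar_mem v
    _ = _ := mul_assoc _ _ _

lemma summable_log_div_sq : Summable fun p : ℕ ↦ Real.log p * ((p : ℝ) ^ 2)⁻¹ := by
  refine summable_of_isBigO_nat (Real.summable_nat_rpow.mpr (by norm_num : (-3 / 2 : ℝ) < -1)) ?_
  suffices (fun x ↦ Real.log x * (x ^ 2)⁻¹) =O[Filter.atTop] fun x : ℝ ↦ x ^ (-3 / 2 : ℝ) from
    this.comp_tendsto tendsto_natCast_atTop_atTop
  refine ((isLittleO_log_rpow_atTop (r := 1 / 2) (by norm_num)).isBigO.mul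
    (Asymptotics.isBigO_refl (fun x : ℝ ↦ (x ^ 2)⁻¹) Filter.atTop)).congr' .rfl ?_
  filter_upwards [Filter.eventually_gt_atTop 0] with x hx
  rw [← Real.rpow_natCast, ← Real.rpow_neg hx.le, ← Real.rpow_add hx]
  norm_num

variable (K)

lemma exists_sum_log_absNorm_div_residueChar_sq_le :
    ∃ C : ℝ, ∀ S : Finset (HeightOneSpectrum (𝓞 K)),
      ∑ v ∈ S, Real.log (absNorm v.asIdeal) / (residueChar v : ℝ) ^ 2 ≤ C := by
  have hnonneg (p : ℕ) : 0 ≤ Real.log p * ((p : ℝ) ^ 2)⁻¹ :=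
    mul_nonneg (Real.log_natCast_nonneg _) (by positivity)
  refine ⟨finrank ℚ K * ∑' p : ℕ, Real.log p * ((p : ℝ) ^ 2)⁻¹, fun S ↦ ?_⟩
  refine (sum_log_absNorm_mul_residueChar_le S (g := fun p ↦ ((p : ℝ) ^ 2)⁻¹)
    fun p ↦ by positivity).trans ?_
  gcongr
  exact summable_log_div_sq.sum_le_tsum _ fun p _ ↦ hnonneg p

/-- The nonzero prime ideals of `𝓞 K` of norm at most `y`. -/
noncomputable def primeIdealsLE (y : ℝ) : Finset (HeightOneSpectrum (𝓞 K)) :=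
  (Ring.HasFiniteQuotients.finite_absNorm_heightOneSpectrum_le ⌊y⌋₊).toFinset

variable {K}

lemma mem_primeIdealsLE {y : ℝ} {v : HeightOneSpectrum (𝓞 K)} :
    v ∈ primeIdealsLE K y ↔ (absNorm v.asIdeal : ℝ) ≤ y := by
  rw [primeIdealsLE, Set.Finite.mem_toFinset]
  exact Nat.le_floor_iff' (zero_lt_one.trans (HeightOneSpectrum.one_lt_absNorm v)).ne'

lemma primeIdealsLE_mono {x y : ℝ} (h : x ≤ y) : primeIdealsLE K x ⊆ primeIdealsLE K y :=
  fun _ hv ↦ mem_primeIdealsLE.mpr ((mem_primeIdealsLE.mp hv).trans h)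

lemma primeIdealsLE_eq_empty {y : ℝ} (hy : y < 2) : primeIdealsLE K y = ∅ :=
  eq_empty_of_forall_notMem fun v hv ↦ by
    linarith [mem_primeIdealsLE.mp hv, two_le_absNorm v]

variable (K)

lemma sum_log_absNorm_le {y : ℝ} (hy : 0 ≤ y) :
    ∑ v ∈ primeIdealsLE K y, Real.log (absNorm v.asIdeal) ≤
      finrank ℚ K * Real.log 4 * y := by
  have hsub : (primeIdealsLE K y).image residueChar ⊆ Nat.primesLE ⌊y⌋₊ := by
    refine image_subset_iff.mpr fun v hv ↦ ?_
    rw [Nat.mem_primesLE]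
    refine ⟨Nat.le_floor (le_trans ?_ (mem_primeIdealsLE.mp hv)), residueChar_prime v⟩
    exact_mod_cast residueChar_le_absNorm v
  calc ∑ v ∈ primeIdealsLE K y, Real.log (absNorm v.asIdeal)
      ≤ finrank ℚ K * ∑ p ∈ (primeIdealsLE K y).image residueChar, Real.log p := by
        simpa using sum_log_absNorm_mul_residueChar_le (primeIdealsLE K y)
          (g := fun _ ↦ 1) fun _ ↦ zero_le_one
    _ ≤ finrank ℚ K * Chebyshev.theta y := by
        rw [Chebyshev.theta_eq_sum_primesLE]
        gcongr
    _ ≤ finrank ℚ K * Real.log 4 * y := by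
        rw [mul_assoc]
        gcongr
        exact Chebyshev.theta_le_log4_mul_x hy

lemma sum_log_absNorm_mul_rpow_le_half_add {s y : ℝ} (hs1 : s ≤ 1) (hy : 0 < y) :
    ∑ v ∈ primeIdealsLE K y, Real.log (absNorm v.asIdeal) * (absNorm v.asIdeal : ℝ) ^ (s - 1) ≤
      ∑ v ∈ primeIdealsLE K (y / 2),
          Real.log (absNorm v.asIdeal) * (absNorm v.asIdeal : ℝ) ^ (s - 1) +
        finrank ℚ K * Real.log 4 * 2 * (y / 2) ^ s := by
  classical
  rw [← sum_sdiff (primeIdealsLE_mono (by linarith : y / 2 ≤ y)), add_comm]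
  gcongr
  calc _ ≤ ∑ v ∈ primeIdealsLE K y \ primeIdealsLE K (y / 2),
          Real.log (absNorm v.asIdeal) * (y / 2) ^ (s - 1) := by
        refine sum_le_sum fun v hv ↦ mul_le_mul_of_nonneg_left ?_ (Real.log_natCast_nonneg _)
        rw [mem_sdiff, mem_primeIdealsLE, mem_primeIdealsLE, not_le] at hv
        exact Real.rpow_le_rpow_of_nonpos (by positivity) hv.2.le (by linarith)
    _ ≤ ∑ v ∈ primeIdealsLE K y, Real.log (absNorm v.asIdeal) * (y / 2) ^ (s - 1) :=
        sum_le_sum_of_subset_of_nonneg sdiff_subset fun v _ _ ↦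
          mul_nonneg (Real.log_natCast_nonneg _) (by positivity)
    _ ≤ finrank ℚ K * Real.log 4 * y * (y / 2) ^ (s - 1) := by
        rw [← sum_mul]
        gcongr
        exact sum_log_absNorm_le K hy.le
    _ = finrank ℚ K * Real.log 4 * 2 * (y / 2) ^ s := by
        rw [Real.rpow_sub_one (by positivity)]
        field_simp

lemma exists_sum_log_absNorm_mul_rpow_le {s : ℝ} (hs : 0 < s) (hs1 : s ≤ 1) :
    ∃ C : ℝ, ∀ y : ℝ, 0 ≤ y →
      ∑ v ∈ primeIdealsLE K y, Real.log (absNorm v.asIdeal) * (absNorm v.asIdeal : ℝ) ^ (s - 1) ≤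
        C * y ^ s := by
  have h2s : 0 < (2 : ℝ) ^ s - 1 := by linarith [Real.one_lt_rpow one_lt_two hs]
  -- `C` solves `C + D = 2 ^ s * C`, which makes the dyadic induction close.
  set D : ℝ := finrank ℚ K * Real.log 4 * 2
  set C := D / (2 ^ s - 1)
  have hCD : C + D = C * 2 ^ s := by
    have : C * (2 ^ s - 1) = D := div_mul_cancel₀ D h2s.ne'
    linarith
  refine ⟨C, fun y hy ↦ ?_⟩
  obtain ⟨k, hk⟩ := pow_unbounded_of_one_lt y one_lt_two
  induction k generalizing y with
  | zero =>
    rw [primeIdealsLE_eq_empty (by linarith), sum_empty]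
    positivity
  | succ k ih =>
    obtain rfl | hy0 := hy.eq_or_lt
    · rw [primeIdealsLE_eq_empty (by linarith), sum_empty]
      positivity
    calc _ ≤ C * (y / 2) ^ s + D * (y / 2) ^ s :=
          (sum_log_absNorm_mul_rpow_le_half_add K hs1 hy0).trans
            (add_le_add_left (ih (y / 2) (by positivity) (by rw [pow_succ] at hk; linarith)) _)
      _ = C * 2 ^ s * (y / 2) ^ s := by rw [← hCD, add_mul]
      _ = C * y ^ s := by rw [Real.div_rpow hy zero_le_two]; field_simp

variable {K}

lemma log_absNorm_eq_sum_multiplicity {I : Ideal (𝓞 K)} (hI : I ≠ ⊥) {y : ℝ}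
    (hy : (absNorm I : ℝ) ≤ y) :
    Real.log (absNorm I) =
      ∑ v ∈ primeIdealsLE K y, multiplicity v.asIdeal I * Real.log (absNorm v.asIdeal) := by
  have hsupp : (Function.mulSupport fun v : HeightOneSpectrum (𝓞 K) ↦
      absNorm v.asIdeal ^ multiplicity v.asIdeal I) ⊆ primeIdealsLE K y := fun v hv ↦ by
    have hdvd : v.asIdeal ∣ I := by
      by_contra h
      exact hv (by simp [multiplicity_eq_zero.mpr h])
    rw [mem_coe, mem_primeIdealsLE]
    exact le_trans (by exact_mod_cast absNorm_le_of_dvd hI hdvd) hy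
  have hfin : Function.HasFiniteMulSupport fun v : HeightOneSpectrum (𝓞 K) ↦
      v.asIdeal ^ multiplicity v.asIdeal I := by
    simpa only [HeightOneSpectrum.maxPowDividing_eq_pow_multiplicity hI]
      using Ideal.hasFiniteMulSupport hI
  conv_lhs => rw [← Ideal.finprod_heightOneSpectrum_pow_multiplicity hI]
  rw [map_finprod _ hfin]
  simp only [map_pow]
  rw [finprod_eq_prod_of_mulSupport_subset _ hsupp, Nat.cast_prod, Real.log_prod fun v _ ↦ ?_]
  · simp only [Nat.cast_pow, Real.log_pow]
  · have := HeightOneSpectrum.one_lt_absNorm v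
    positivity

open Classical in
lemma multiplicity_eq_card_Icc {v : HeightOneSpectrum (𝓞 K)} {I : Ideal (𝓞 K)} (hI : I ≠ ⊥)
    {L : ℕ} (hL : absNorm I ≤ L) :
    multiplicity v.asIdeal I = #{k ∈ Icc 1 L | v.asIdeal ^ k ∣ I} := by
  have hfin := FiniteMultiplicity.of_prime_left v.prime hI
  have hle : multiplicity v.asIdeal I ≤ L := by
    refine le_trans ?_ hL
    exact (Nat.lt_pow_self (HeightOneSpectrum.one_lt_absNorm v)).le.trans
      (map_pow absNorm v.asIdeal _ ▸ absNorm_le_of_dvd hI (pow_multiplicity_dvd v.asIdeal I))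
  have : ({k ∈ Icc 1 L | v.asIdeal ^ k ∣ I} : Finset ℕ) = Icc 1 (multiplicity v.asIdeal I) := by
    ext k
    simp only [mem_filter, mem_Icc, hfin.pow_dvd_iff_le_multiplicity]
    lia
  rw [this, Nat.card_Icc, Nat.add_sub_cancel]

end PrimeSums

section Mertens

variable {K : Type*} [Field K] [NumberField K]

open Classical in
lemma sum_log_absNorm_span_singleton_eq {B : Finset (𝓞 K)} {y : ℝ}
    (hB : ∀ α ∈ B, α ≠ 0 ∧ (absNorm (Ideal.span {α}) : ℝ) ≤ y) :
    ∑ α ∈ B, Real.log (absNorm (Ideal.span {α})) =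
      ∑ v ∈ primeIdealsLE K y, Real.log (absNorm v.asIdeal) *
        ∑ k ∈ Icc 1 ⌊y⌋₊, (#{α ∈ B | α ∈ v.asIdeal ^ k} : ℝ) := by
  have hlog : ∀ α ∈ B, Real.log (absNorm (Ideal.span {α})) = ∑ v ∈ primeIdealsLE K y,
      #{k ∈ Icc 1 ⌊y⌋₊ | α ∈ v.asIdeal ^ k} * Real.log (absNorm v.asIdeal) := fun α hα ↦ by
    have hα0 := Ideal.span_singleton_eq_bot.not.mpr (hB α hα).1
    rw [log_absNorm_eq_sum_multiplicity hα0 (hB α hα).2]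
    refine sum_congr rfl fun v _ ↦ ?_
    simp only [multiplicity_eq_card_Icc hα0 (Nat.le_floor (hB α hα).2), Ideal.dvd_span_singleton]
  rw [sum_congr rfl hlog, sum_comm]
  refine sum_congr rfl fun v _ ↦ ?_
  rw [← sum_mul, mul_comm]
  congr 1
  exact_mod_cast sum_card_bipartiteAbove_eq_sum_card_bipartiteBelow fun α k ↦ α ∈ v.asIdeal ^ k

lemma sum_Icc_two_inv_pow_le {q : ℝ} (hq : 2 ≤ q) (L : ℕ) :
    ∑ k ∈ Icc 2 L, (q ^ k)⁻¹ ≤ 2 / q ^ 2 := by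
  have hq2 : q⁻¹ ≤ 1 / 2 := by rw [one_div]; gcongr
  simp only [← inv_pow]
  calc ∑ k ∈ Icc 2 L, q⁻¹ ^ k ≤ q⁻¹ ^ 2 / (1 - q⁻¹) :=
        geom_sum_Ico_le_of_lt_one (n := L + 1) (by positivity) (by linarith)
    _ ≤ q⁻¹ ^ 2 / (1 / 2) := by gcongr; linarith
    _ = 2 / q ^ 2 := by rw [inv_pow]; ring

variable {ι : Type*} [Fintype ι] [DecidableEq ι] (b : Basis ι ℤ (𝓞 K))

open Classical in
lemma exists_sum_Icc_two_card_coordBox_inter_le {T : ℝ} (hT : 0 ≤ T) :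
    ∃ C : ℝ, 0 ≤ C ∧ ∀ (v : HeightOneSpectrum (𝓞 K)) (a : ι → ℤ) (X L : ℕ),
      (∀ α ∈ coordBox b a X,
        α ≠ 0 ∧ (absNorm (Ideal.span {α}) : ℝ) ≤ (T * X) ^ Fintype.card ι) →
      ∑ k ∈ Icc 2 L, (#{α ∈ coordBox b a X | α ∈ v.asIdeal ^ k} : ℝ) ≤
        C * X ^ Fintype.card ι / (absNorm v.asIdeal : ℝ) ^ 2 := by
  obtain ⟨C, hC, hcard⟩ := exists_card_coordBox_inter_le b hT
  refine ⟨2 * C, by positivity, fun v a X L hbox ↦ ?_⟩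
  calc ∑ k ∈ Icc 2 L, (#{α ∈ coordBox b a X | α ∈ v.asIdeal ^ k} : ℝ)
      ≤ ∑ k ∈ Icc 2 L, C * X ^ Fintype.card ι * ((absNorm v.asIdeal : ℝ) ^ k)⁻¹ := by
        refine sum_le_sum fun k _ ↦ (hcard _ a X (pow_ne_zero k v.ne_bot) hbox).trans_eq ?_
        rw [map_pow, Nat.cast_pow, div_eq_mul_inv, mul_assoc]
    _ ≤ C * X ^ Fintype.card ι * (2 / (absNorm v.asIdeal : ℝ) ^ 2) := by
        rw [← mul_sum]
        gcongr
        exact sum_Icc_two_inv_pow_le (two_le_absNorm v) L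
    _ = 2 * C * X ^ Fintype.card ι / (absNorm v.asIdeal : ℝ) ^ 2 := by ring

open Classical in
lemma exists_abs_sum_card_coordBox_inter_sub_le {T : ℝ} (hT : 0 ≤ T) :
    ∃ C : ℝ, 0 ≤ C ∧ ∀ (v : HeightOneSpectrum (𝓞 K)) (a : ι → ℤ) (X L : ℕ), 1 ≤ L →
      (absNorm v.asIdeal : ℝ) ≤ (T * X) ^ Fintype.card ι →
      (∀ α ∈ coordBox b a X,
        α ≠ 0 ∧ (absNorm (Ideal.span {α}) : ℝ) ≤ (T * X) ^ Fintype.card ι) →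
      |∑ k ∈ Icc 1 L, (#{α ∈ coordBox b a X | α ∈ v.asIdeal ^ k} : ℝ) -
          X ^ Fintype.card ι / absNorm v.asIdeal| ≤
        C * (X ^ (Fintype.card ι - 1) * (absNorm v.asIdeal : ℝ) ^ ((Fintype.card ι : ℝ)⁻¹ - 1) +
          X ^ Fintype.card ι / (absNorm v.asIdeal : ℝ) ^ 2) := by
  obtain ⟨C₁, hC₁, hmain⟩ := exists_abs_card_coordBox_inter_sub_le b hT
  obtain ⟨C₂, hC₂, htail⟩ := exists_sum_Icc_two_card_coordBox_inter_le b hT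
  refine ⟨C₁ + C₂, by positivity, fun v a X L hL hv hbox ↦ ?_⟩
  rw [← add_sum_Ioc_eq_sum_Icc hL, pow_one, add_sub_right_comm]
  have htail_nonneg : 0 ≤ ∑ k ∈ Ioc 1 L, (#{α ∈ coordBox b a X | α ∈ v.asIdeal ^ k} : ℝ) := by
    positivity
  refine (abs_add_le _ _).trans ((add_le_add (hmain _ a X v.ne_bot hv)
    ((abs_of_nonneg htail_nonneg).trans_le (htail v a X L hbox))).trans ?_)
  rw [mul_assoc, mul_div_assoc, mul_add]
  gcongr <;> linarith

lemma exists_abs_sum_log_absNorm_coordBox_sub_mul_le {T : ℝ} (hT : 0 ≤ T) :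
    ∃ C : ℝ, ∀ (a : ι → ℤ) (X : ℕ), 1 ≤ (T * X) ^ Fintype.card ι →
      (∀ α ∈ coordBox b a X,
        α ≠ 0 ∧ (absNorm (Ideal.span {α}) : ℝ) ≤ (T * X) ^ Fintype.card ι) →
      |∑ α ∈ coordBox b a X, Real.log (absNorm (Ideal.span {α})) -
          X ^ Fintype.card ι * ∑ v ∈ primeIdealsLE K ((T * X) ^ Fintype.card ι),
            Real.log (absNorm v.asIdeal) / absNorm v.asIdeal| ≤
        X ^ Fintype.card ι * C := by
  classical
  have hn := card_basis_ringOfIntegers_ne_zero b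
  obtain ⟨C₁, hC₁, hcount⟩ := exists_abs_sum_card_coordBox_inter_sub_le b hT
  obtain ⟨C₂, hsq⟩ := exists_sum_log_absNorm_div_residueChar_sq_le K
  obtain ⟨C₃, hroot⟩ := exists_sum_log_absNorm_mul_rpow_le K
    (s := (Fintype.card ι : ℝ)⁻¹) (by positivity) (Nat.cast_inv_le_one _)
  set n := Fintype.card ι
  refine ⟨C₁ * (C₃ * T + C₂), fun a X hX hbox ↦ ?_⟩
  rw [sum_log_absNorm_span_singleton_eq hbox, mul_sum, ← sum_sub_distrib]
  set S := primeIdealsLE K ((T * X) ^ n)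
  calc _ ≤ ∑ v ∈ S, Real.log (absNorm v.asIdeal) *
        (C₁ * (X ^ (n - 1) * (absNorm v.asIdeal : ℝ) ^ ((n : ℝ)⁻¹ - 1) +
          X ^ n / (residueChar v : ℝ) ^ 2)) := by
        refine (abs_sum_le_sum_abs _ _).trans (sum_le_sum fun v hv ↦ ?_)
        rw [mul_div_left_comm, ← mul_sub, abs_mul, abs_of_nonneg (Real.log_natCast_nonneg _)]
        refine mul_le_mul_of_nonneg_left ((hcount v a X _ ((Nat.one_le_floor_iff _).mpr hX)
          (mem_primeIdealsLE.mp hv) hbox).trans ?_) (Real.log_natCast_nonneg _)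
        have := (residueChar_prime v).pos
        gcongr
        exact residueChar_le_absNorm v
    _ = C₁ * (X ^ (n - 1) * (∑ v ∈ S,
          Real.log (absNorm v.asIdeal) * (absNorm v.asIdeal : ℝ) ^ ((n : ℝ)⁻¹ - 1)) +
        X ^ n * ∑ v ∈ S, Real.log (absNorm v.asIdeal) / (residueChar v : ℝ) ^ 2) := by
        simp only [mul_add, mul_sum, ← sum_add_distrib]
        exact sum_congr rfl fun v _ ↦ by ring
    _ ≤ C₁ * (X ^ (n - 1) * (C₃ * (T * X)) + X ^ n * C₂) := by
        have hS := hroot ((T * X) ^ n) (by positivity)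
        rw [Real.pow_rpow_inv_natCast (by positivity) hn] at hS
        gcongr
        exact hsq S
    _ = X ^ n * (C₁ * (C₃ * T + C₂)) := by
        rw [← pow_sub_one_mul hn (X : ℝ)]
        ring

lemma abs_sum_log_absNorm_coordBox_sub_le {T : ℝ} (hT : 1 ≤ T) {a : ι → ℤ} {X : ℕ} (hX : 1 ≤ X)
    (hbox : ∀ α ∈ coordBox b a X, (X : ℝ) ^ Fintype.card ι ≤ absNorm (Ideal.span {α}) ∧
      (absNorm (Ideal.span {α}) : ℝ) ≤ (T * X) ^ Fintype.card ι) :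
    |∑ α ∈ coordBox b a X, Real.log (absNorm (Ideal.span {α})) -
        X ^ Fintype.card ι * (Fintype.card ι * Real.log X)| ≤
      X ^ Fintype.card ι * (Fintype.card ι * Real.log T) := by
  set n := Fintype.card ι
  have hconst (c : ℝ) : (X : ℝ) ^ n * c = ∑ _α ∈ coordBox b a X, c := by
    rw [sum_const, card_coordBox, nsmul_eq_mul, Nat.cast_pow]
  rw [hconst, hconst, ← sum_sub_distrib]
  refine (abs_sum_le_sum_abs _ _).trans (sum_le_sum fun α hα ↦ ?_)
  obtain ⟨hlower, hupper⟩ := hbox α hα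
  have hXn : (0 : ℝ) < X ^ n := by positivity
  have hlog₁ := Real.log_le_log hXn hlower
  have hlog₂ := Real.log_le_log (hXn.trans_le hlower) hupper
  rw [Real.log_pow] at hlog₁ hlog₂
  rw [Real.log_mul (by positivity) (by positivity), mul_add] at hlog₂
  have : 0 ≤ n * Real.log T := mul_nonneg n.cast_nonneg (Real.log_nonneg hT)
  rw [abs_le]
  constructor <;> linarith

variable (K)

lemma exists_abs_sum_log_div_absNorm_sub_finrank_mul_log_le :
    ∃ T C : ℝ, 1 ≤ T ∧ ∀ X : ℕ, 1 ≤ X →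
      |∑ v ∈ primeIdealsLE K ((T * X) ^ finrank ℚ K),
          Real.log (absNorm v.asIdeal) / absNorm v.asIdeal - finrank ℚ K * Real.log X| ≤ C := by
  classical
  have b := RingOfIntegers.basis K
  rw [← card_basis_ringOfIntegers b]
  obtain ⟨T, hT, hbox⟩ := exists_coordBox_absNorm_bounds b
  obtain ⟨C, hC⟩ := exists_abs_sum_log_absNorm_coordBox_sub_mul_le b (zero_le_one.trans hT)
  set n := Fintype.card (Free.ChooseBasisIndex ℤ (𝓞 K))
  refine ⟨T, C + n * Real.log T, hT, fun X hX ↦ ?_⟩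
  obtain ⟨a, ha⟩ := hbox X
  have hX' : (1 : ℝ) ≤ X := by exact_mod_cast hX
  have hXn : (0 : ℝ) < X ^ n := by positivity
  have hprime := hC a X (one_le_pow₀ (one_le_mul_of_one_le_of_one_le hT hX')) fun α hα ↦
    ⟨by rintro rfl; simpa using hXn.trans_le (ha 0 hα).1, (ha α hα).2⟩
  have hsize := abs_sum_log_absNorm_coordBox_sub_le b hT hX ha
  refine le_of_mul_le_mul_left ?_ hXn
  rw [← abs_of_pos hXn, ← abs_mul, abs_of_pos hXn, mul_add, mul_sub]
  exact (abs_sub_le _ _ _).trans (add_le_add ((abs_sub_comm _ _).trans_le hprime) hsize)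

lemma sum_sdiff_log_div_absNorm_le [DecidableEq (HeightOneSpectrum (𝓞 K))] {x y : ℝ} (hx : 0 < x)
    (hy : 0 ≤ y) :
    ∑ v ∈ primeIdealsLE K y \ primeIdealsLE K x, Real.log (absNorm v.asIdeal) / absNorm v.asIdeal ≤
      finrank ℚ K * Real.log 4 * (y / x) :=
  calc _ ≤ ∑ v ∈ primeIdealsLE K y \ primeIdealsLE K x, Real.log (absNorm v.asIdeal) / x := by
        refine sum_le_sum fun v hv ↦ div_le_div_of_nonneg_left (Real.log_natCast_nonneg _) hx ?_
        rw [mem_sdiff, mem_primeIdealsLE, mem_primeIdealsLE, not_le] at hv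
        exact hv.2.le
    _ ≤ ∑ v ∈ primeIdealsLE K y, Real.log (absNorm v.asIdeal) / x :=
        sum_le_sum_of_subset_of_nonneg sdiff_subset fun v _ _ ↦
          div_nonneg (Real.log_natCast_nonneg _) hx.le
    _ ≤ finrank ℚ K * Real.log 4 * (y / x) := by
        rw [← sum_div, ← mul_div_assoc]
        gcongr
        exact sum_log_absNorm_le K hy

theorem exists_abs_sum_log_div_absNorm_sub_log_le :
    ∃ C : ℝ, ∀ x : ℝ, 1 ≤ x →
      |∑ v ∈ primeIdealsLE K x, Real.log (absNorm v.asIdeal) / absNorm v.asIdeal - Real.log x| ≤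
        C := by
  classical
  have hn : finrank ℚ K ≠ 0 := finrank_pos.ne'
  obtain ⟨T, C, hT, hC⟩ := exists_abs_sum_log_div_absNorm_sub_finrank_mul_log_le K
  set n := finrank ℚ K
  refine ⟨C + n * Real.log 4 * (T * 2) ^ n + n * Real.log 2, fun x hx ↦ ?_⟩
  obtain ⟨r, hr, rfl⟩ : ∃ r : ℝ, 1 ≤ r ∧ r ^ n = x :=
    ⟨x ^ (n : ℝ)⁻¹, Real.one_le_rpow hx (by positivity),
      Real.rpow_inv_natCast_pow (by positivity) hn⟩
  have hrX : r ≤ ⌈r⌉₊ := Nat.le_ceil r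
  have hX2 : (⌈r⌉₊ : ℝ) ≤ 2 * r := by linarith [Nat.ceil_lt_add_one (zero_le_one.trans hr)]
  have hscale := hC ⌈r⌉₊ (Nat.one_le_ceil_iff.mpr (by linarith))
  set X := ⌈r⌉₊
  have hxy : r ^ n ≤ (T * X) ^ n := by gcongr; nlinarith
  rw [← sum_sdiff (primeIdealsLE_mono hxy)] at hscale
  have hgap := sum_sdiff_log_div_absNorm_le K (x := r ^ n) (y := (T * X) ^ n)
    (by positivity) (by positivity)
  have hgap' : n * Real.log 4 * ((T * X) ^ n / r ^ n) ≤ n * Real.log 4 * (T * 2) ^ n := by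
    rw [← div_pow, mul_div_assoc]
    gcongr
    rwa [div_le_iff₀ (by positivity)]
  have hgap_nonneg : 0 ≤ ∑ v ∈ primeIdealsLE K ((T * X) ^ n) \ primeIdealsLE K (r ^ n),
      Real.log (absNorm v.asIdeal) / absNorm v.asIdeal :=
    sum_nonneg fun v _ ↦ div_nonneg (Real.log_natCast_nonneg _) (Nat.cast_nonneg _)
  have hlog : n * Real.log r ≤ n * Real.log X := by gcongr
  have hlog' : n * Real.log X ≤ n * (Real.log 2 + Real.log r) := by
    rw [← Real.log_mul two_ne_zero (by positivity)]
    gcongr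
  have hlog2 : 0 ≤ n * Real.log 2 := mul_nonneg n.cast_nonneg (Real.log_nonneg one_le_two)
  rw [Real.log_pow]
  rw [abs_le] at hscale ⊢
  constructor <;> linarith

end Mertens

section DegreeOne

variable {K : Type*} [Field K] [NumberField K]

lemma residueChar_sq_le_absNorm {v : HeightOneSpectrum (𝓞 K)}
    (hv : ¬ (absNorm v.asIdeal).Prime) : residueChar v ^ 2 ≤ absNorm v.asIdeal := by
  obtain ⟨k, hk0, hk⟩ := exists_absNorm_eq_residueChar_pow v
  have hk1 : k ≠ 1 := by
    rintro rfl
    exact hv (by rw [hk, pow_one]; exact residueChar_prime v)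
  rw [hk]
  exact Nat.pow_le_pow_right (residueChar_prime v).pos (by lia)

variable (K)

lemma exists_sum_log_div_absNorm_not_prime_le :
    ∃ C : ℝ, ∀ S : Finset (HeightOneSpectrum (𝓞 K)),
      ∑ v ∈ S with ¬ (absNorm v.asIdeal).Prime,
        Real.log (absNorm v.asIdeal) / absNorm v.asIdeal ≤ C := by
  obtain ⟨C, hC⟩ := exists_sum_log_absNorm_div_residueChar_sq_le K
  refine ⟨C, fun S ↦ (sum_le_sum fun v hv ↦ ?_).trans (hC _)⟩
  have hp := (residueChar_prime v).pos
  gcongr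
  exact_mod_cast residueChar_sq_le_absNorm (mem_filter.mp hv).2

lemma sum_log_div_absNorm_prime_eq {x : ℝ} (hx : 0 ≤ x) :
    ∑ v ∈ primeIdealsLE K x with (absNorm v.asIdeal).Prime,
        Real.log (absNorm v.asIdeal) / absNorm v.asIdeal =
      ∑ p ∈ range (⌊x⌋₊ + 1) with p.Prime,
        (Nat.card {v : HeightOneSpectrum (𝓞 K) // absNorm v.asIdeal = p} : ℝ) *
          Real.log p / p := by
  have hmem (p : ℕ) : p ∈ range (⌊x⌋₊ + 1) ↔ (p : ℝ) ≤ x := by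
    rw [mem_range, Nat.lt_succ_iff, Nat.le_floor_iff hx]
  rw [← sum_fiberwise_of_maps_to (g := fun v ↦ absNorm v.asIdeal) (fun v hv ↦ ?_)]
  · refine sum_congr rfl fun p hp ↦ ?_
    rw [mem_filter, hmem] at hp
    rw [Nat.subtype_card {v ∈ {v ∈ primeIdealsLE K x | (absNorm v.asIdeal).Prime} |
        absNorm v.asIdeal = p} fun v ↦ ?_,
      sum_congr rfl fun v hv ↦ by rw [(mem_filter.mp hv).2], sum_const, nsmul_eq_mul,
      mul_div_assoc]
    simp only [mem_filter, mem_primeIdealsLE, and_iff_right_iff_imp]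
    rintro rfl
    exact hp
  · rw [mem_filter, mem_primeIdealsLE] at hv
    exact mem_filter.mpr ⟨(hmem _).mpr hv.1, hv.2⟩

theorem exists_abs_sum_card_absNorm_eq_sub_log_le :
    ∃ C : ℝ, ∀ x : ℝ, 1 ≤ x →
      |∑ p ∈ range (⌊x⌋₊ + 1) with p.Prime,
        (Nat.card {v : HeightOneSpectrum (𝓞 K) // absNorm v.asIdeal = p} : ℝ) *
          Real.log p / p - Real.log x| ≤ C := by
  obtain ⟨C₁, h₁⟩ := exists_abs_sum_log_div_absNorm_sub_log_le K
  obtain ⟨C₂, h₂⟩ := exists_sum_log_div_absNorm_not_prime_le K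
  refine ⟨C₁ + C₂, fun x hx ↦ ?_⟩
  have hall := h₁ x hx
  rw [← sum_filter_add_sum_filter_not (primeIdealsLE K x) fun v ↦ (absNorm v.asIdeal).Prime,
    sum_log_div_absNorm_prime_eq K (zero_le_one.trans hx)] at hall
  have hrest := h₂ (primeIdealsLE K x)
  have hrest_nonneg : 0 ≤ ∑ v ∈ primeIdealsLE K x with ¬ (absNorm v.asIdeal).Prime,
      Real.log (absNorm v.asIdeal) / absNorm v.asIdeal :=
    sum_nonneg fun v _ ↦ by positivity
  rw [abs_le] at hall ⊢
  constructor <;> linarith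

end DegreeOne

section RootCount

/-- The number of roots of the integer polynomial `f` in `ZMod n`. -/
noncomputable def rootCount (f : ℤ[X]) (n : ℕ) : ℕ :=
  Nat.card {r : ZMod n // aeval r f = 0}

lemma rootCount_integralNormalization {f : ℤ[X]} (hf : 1 ≤ f.natDegree) {p : ℕ} [Fact p.Prime]
    (hp : ¬ (p : ℤ) ∣ f.leadingCoeff) : rootCount f.integralNormalization p = rootCount f p := by
  have ha : (f.leadingCoeff : ZMod p) ≠ 0 := mt (ZMod.intCast_zmod_eq_zero_iff_dvd _ p).mp hp
  refine (Nat.card_congr ((Equiv.mulLeft₀ _ ha).subtypeEquiv fun r ↦ ?_)).symm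
  have := integralNormalization_eval₂_leadingCoeff_mul hf (algebraMap ℤ (ZMod p)) r
  rw [← aeval_def, ← aeval_def, algebraMap_int_eq, eq_intCast] at this
  rw [Equiv.mulLeft₀_apply, this, mul_eq_zero_iff_left (pow_ne_zero _ ha)]

lemma card_normalizedFactors_natDegree_eq_one {F : Type*} [Field F] [DecidableEq F] {g : F[X]}
    (hg : g ≠ 0) :
    Nat.card {Q : (UniqueFactorizationMonoid.normalizedFactors g).toFinset //
      (Q : F[X]).natDegree = 1} = Nat.card {r : F // g.eval r = 0} := by
  have hmem (r : F) : X - C r ∈ (UniqueFactorizationMonoid.normalizedFactors g).toFinset ↔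
      g.eval r = 0 := by
    rw [Multiset.mem_toFinset, Polynomial.mem_normalizedFactors_iff hg, dvd_iff_isRoot, IsRoot.def]
    exact and_iff_right (irreducible_X_sub_C r) |>.trans (and_iff_right (monic_X_sub_C r))
  refine (Nat.card_congr (Equiv.ofBijective
    (fun r ↦ ⟨⟨X - C r.1, (hmem r).mpr r.2⟩, natDegree_X_sub_C r.1⟩) ⟨fun r s h ↦ ?_, ?_⟩)).symm
  · simpa [Subtype.ext_iff] using h
  · rintro ⟨⟨Q, hQ⟩, hQ1⟩
    have hmonic := ((Polynomial.mem_normalizedFactors_iff hg).mp (Multiset.mem_toFinset.mp hQ)).2.1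
    have hQX : Q = X - C (-Q.coeff 0) := by
      rw [map_neg, sub_neg_eq_add]
      exact hmonic.eq_X_add_C hQ1
    exact ⟨⟨_, (hmem _).mp (hQX ▸ hQ)⟩, Subtype.ext (Subtype.ext hQX.symm)⟩

variable {K : Type*} [Field K] [NumberField K]

lemma residueChar_eq_of_absNorm_eq {p : ℕ} (hp : p.Prime) {v : HeightOneSpectrum (𝓞 K)}
    (hv : absNorm v.asIdeal = p) : residueChar v = p := by
  rw [← Nat.prime_dvd_prime_iff_eq (residueChar_prime v) hp, ← hv]
  exact Int.absNorm_under_dvd_absNorm v.asIdeal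

lemma card_absNorm_eq_card_inertiaDeg_eq_one (p : ℕ) [Fact p.Prime] :
    Nat.card {v : HeightOneSpectrum (𝓞 K) // absNorm v.asIdeal = p} =
      Nat.card {P : (Ideal.span {(p : ℤ)}).primesOver (𝓞 K) // P.1.inertiaDeg ℤ = 1} := by
  have hp : p.Prime := Fact.out
  have hbot : Ideal.span {(p : ℤ)} ≠ ⊥ := by simp [hp.ne_zero]
  have hlies (v : HeightOneSpectrum (𝓞 K)) (hv : absNorm v.asIdeal = p) :
      v.asIdeal.LiesOver (Ideal.span {(p : ℤ)}) :=
    residueChar_eq_of_absNorm_eq hp hv ▸ Int.liesOver_span_absNorm v.asIdeal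
  refine Nat.card_congr
    { toFun v := ⟨⟨v.1.asIdeal, v.1.isPrime, hlies v.1 v.2⟩, ?_⟩
      invFun P := ⟨⟨P.1.1, P.1.2.1, Ideal.ne_bot_of_mem_primesOver hbot P.1.2⟩, ?_⟩
      left_inv _ := rfl
      right_inv _ := rfl }
  · have := hlies v.1 v.2
    exact Nat.pow_right_injective hp.two_le
      ((Ideal.pow_inertiaDeg p v.1.asIdeal).trans (v.2.trans (pow_one p).symm))
  · have := P.1.2.1
    have := P.1.2.2
    rw [← Ideal.pow_inertiaDeg p P.1.1, P.2, pow_one]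

lemma card_absNorm_eq_rootCount_minpoly {θ : 𝓞 K} {p : ℕ} [Fact p.Prime]
    (hp : ¬ p ∣ RingOfIntegers.exponent θ) :
    Nat.card {v : HeightOneSpectrum (𝓞 K) // absNorm v.asIdeal = p} =
      rootCount (minpoly ℤ θ) p := by
  rw [card_absNorm_eq_card_inertiaDeg_eq_one, rootCount]
  simp_rw [aeval_def, ← eval_map, algebraMap_int_eq]
  rw [← card_normalizedFactors_natDegree_eq_one (map_monic_ne_zero (minpoly.monic θ.isIntegral))]
  refine Nat.card_congr
    ((Ideal.primesOverSpanEquivMonicFactorsMod hp).subtypeEquiv fun P ↦ ?_)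
  rw [← Ideal.inertiaDeg_primesOverSpanEquivMonicFactorsMod_symm_apply' hp (Subtype.prop _),
    Subtype.coe_eta, Equiv.symm_apply_apply]

lemma exponent_ne_zero {θ : 𝓞 K} (hθ : Algebra.adjoin ℚ {(θ : K)} = ⊤) :
    RingOfIntegers.exponent θ ≠ 0 := by
  have hderiv : aeval θ (derivative (minpoly ℤ θ)) ≠ 0 := fun h ↦ by
    have hdeg := minpoly.natDegree_pos θ.isIntegral
    refine (degree_derivative_lt (minpoly.ne_zero θ.isIntegral)).not_ge
      (minpoly.IsIntegrallyClosed.degree_le_of_ne_zero (s := θ) (fun h0 ↦ ?_) h)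
    exact hdeg.ne' (derivative_eq_zero.mp h0)
  have hcond : conductor ℤ θ ≠ ⊥ := fun h ↦ by
    have := conductor_mul_differentIdeal ℤ ℚ K θ hθ
    rw [h, Ideal.bot_mul, eq_comm, Ideal.span_singleton_eq_bot] at this
    exact hderiv this
  rw [RingOfIntegers.exponent, Ne, Ideal.absNorm_eq_zero_iff]
  exact Ideal.under_ne_bot ℤ hcond

lemma natDegree_minpoly_eq_finrank {θ : 𝓞 K} (hθ : Algebra.adjoin ℚ {(θ : K)} = ⊤) :
    (minpoly ℤ θ).natDegree = finrank ℚ K := by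
  have hint : IsIntegral ℚ (θ : K) := .of_finite ℚ _
  rw [(PowerBasis.ofAdjoinEqTop hint hθ).finrank, ← PowerBasis.natDegree_minpoly,
    PowerBasis.ofAdjoinEqTop_gen, minpoly.isIntegrallyClosed_eq_field_fractions ℚ K θ.isIntegral,
    (minpoly.monic θ.isIntegral).natDegree_map]

lemma finrank_eq_natDegree {f : ℤ[X]} (hf : Irreducible f) (hdeg : 1 ≤ f.natDegree) {α : K}
    (hα : aeval α f = 0) (hadj : Algebra.adjoin ℚ {α} = ⊤) : finrank ℚ K = f.natDegree := by
  have hint : IsIntegral ℚ α := .of_finite ℚ _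
  have hirr := (IsPrimitive.Int.irreducible_iff_irreducible_map_cast
    (hf.isPrimitive (by lia))).mp hf
  have hroot : aeval α (f.map (Int.castRingHom ℚ)) = 0 := by
    rw [← algebraMap_int_eq, aeval_map_algebraMap, hα]
  rw [(PowerBasis.ofAdjoinEqTop hint hadj).finrank, ← PowerBasis.natDegree_minpoly,
    PowerBasis.ofAdjoinEqTop_gen, ← minpoly.eq_of_irreducible hirr hroot,
    natDegree_mul_C (by simpa using hirr.ne_zero),
    natDegree_map_eq_of_injective Int.cast_injective]

lemma adjoin_zsmul_eq_top {A : Type*} [Ring A] [Algebra ℚ A] {c : ℤ} (hc : c ≠ 0) {α : A}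
    (hα : Algebra.adjoin ℚ {α} = ⊤) : Algebra.adjoin ℚ {c • α} = ⊤ := by
  rw [← Int.cast_smul_eq_zsmul ℚ, eq_top_iff, ← hα]
  refine Algebra.adjoin_le (Set.singleton_subset_iff.mpr ?_)
  have hmem := Subalgebra.smul_mem _ (Algebra.self_mem_adjoin_singleton ℚ ((c : ℚ) • α)) (c : ℚ)⁻¹
  rwa [inv_smul_smul₀ (Int.cast_ne_zero.mpr hc)] at hmem

lemma minpoly_eq_integralNormalization {f : ℤ[X]} (hf : Irreducible f) (hdeg : 1 ≤ f.natDegree)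
    {α : K} (hα : aeval α f = 0) (hadj : Algebra.adjoin ℚ {α} = ⊤) {θ : 𝓞 K}
    (hθ : (θ : K) = f.leadingCoeff • α) : minpoly ℤ θ = f.integralNormalization := by
  have hzero : aeval θ f.integralNormalization = 0 := by
    apply RingOfIntegers.coe_injective
    have := integralNormalization_aeval_eq_zero hα fun x ↦ by simp
    rw [← aeval_algebraMap_apply, map_zero]
    rwa [eq_intCast, ← zsmul_eq_mul, ← hθ] at this
  have hadjθ : Algebra.adjoin ℚ {(θ : K)} = ⊤ :=
    hθ ▸ adjoin_zsmul_eq_top (leadingCoeff_ne_zero.mpr hf.ne_zero) hadj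
  refine (minpoly.IsIntegrallyClosed.unique_of_degree_le_degree_minpoly
    (monic_integralNormalization hf.ne_zero) hzero ?_).symm
  rw [degree_integralNormalization, degree_eq_natDegree hf.ne_zero,
    degree_eq_natDegree (minpoly.ne_zero θ.isIntegral), natDegree_minpoly_eq_finrank hadjθ,
    finrank_eq_natDegree hf hdeg hα hadj]

lemma exists_numberField_minpoly_eq_integralNormalization {f : ℤ[X]} (hf : Irreducible f)
    (hdeg : 1 ≤ f.natDegree) :
    ∃ (K : Type) (_ : Field K) (_ : NumberField K) (θ : 𝓞 K),
      Algebra.adjoin ℚ {(θ : K)} = ⊤ ∧ minpoly ℤ θ = f.integralNormalization := by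
  have : Fact (Irreducible (f.map (algebraMap ℤ ℚ))) :=
    ⟨(IsPrimitive.Int.irreducible_iff_irreducible_map_cast (hf.isPrimitive (by lia))).mp hf⟩
  let α := AdjoinRoot.root (f.map (algebraMap ℤ ℚ))
  have hα : aeval α f = 0 := by
    have hroot := AdjoinRoot.eval₂_root (f.map (algebraMap ℤ ℚ))
    rw [eval₂_map] at hroot
    rwa [aeval_def, Subsingleton.elim (algebraMap ℤ (AdjoinRoot _)) (RingHom.comp _ _)]
  have hadj : Algebra.adjoin ℚ {α} = ⊤ := by
    convert! AdjoinRoot.adjoinRoot_eq_top (f := f.map (algebraMap ℤ ℚ))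
  exact ⟨_, _, inferInstance, ⟨_, isIntegral_leadingCoeff_smul f α hα⟩,
    adjoin_zsmul_eq_top (leadingCoeff_ne_zero.mpr hf.ne_zero) hadj,
    minpoly_eq_integralNormalization hf hdeg hα hadj rfl⟩

lemma exists_abs_sum_sub_sum_le {g h : ℕ → ℝ} {E : ℤ} (hE : E ≠ 0)
    (hgh : ∀ p : ℕ, p.Prime → ¬ (p : ℤ) ∣ E → g p = h p) :
    ∃ C : ℝ, ∀ s : Finset ℕ, |∑ p ∈ s with p.Prime, g p - ∑ p ∈ s with p.Prime, h p| ≤ C := by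
  refine ⟨∑ p ∈ E.natAbs.primeFactors, |g p - h p|, fun s ↦ ?_⟩
  have hsupp (p : ℕ) (hp : p ∈ s.filter Nat.Prime) (hpE : p ∉ E.natAbs.primeFactors) :
      g p - h p = 0 := by
    have hprime := (mem_filter.mp hp).2
    refine sub_eq_zero.mpr (hgh p hprime fun h ↦ hpE ?_)
    exact Nat.mem_primeFactors.mpr ⟨hprime, Int.natCast_dvd.mp h, Int.natAbs_ne_zero.mpr hE⟩
  calc |∑ p ∈ s with p.Prime, g p - ∑ p ∈ s with p.Prime, h p|
      = |∑ p ∈ s.filter Nat.Prime ∩ E.natAbs.primeFactors, (g p - h p)| := by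
        rw [← sum_sub_distrib, sum_subset inter_subset_left fun p hp hpE ↦
          hsupp p hp fun h ↦ hpE (mem_inter.mpr ⟨hp, h⟩)]
    _ ≤ ∑ p ∈ E.natAbs.primeFactors, |g p - h p| :=
        (abs_sum_le_sum_abs _ _).trans
          (sum_le_sum_of_subset_of_nonneg inter_subset_right fun _ _ _ ↦ abs_nonneg _)

theorem exists_abs_sum_rootCount_sub_log_le {f : ℤ[X]} (hf : Irreducible f)
    (hdeg : 1 ≤ f.natDegree) :
    ∃ C : ℝ, ∀ x : ℝ, 1 ≤ x →
      |∑ p ∈ range (⌊x⌋₊ + 1) with p.Prime, (rootCount f p : ℝ) * Real.log p / p -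
        Real.log x| ≤ C := by
  obtain ⟨K, _, _, θ, hadj, hmin⟩ := exists_numberField_minpoly_eq_integralNormalization hf hdeg
  have hE : (RingOfIntegers.exponent θ : ℤ) * f.leadingCoeff ≠ 0 :=
    mul_ne_zero (Nat.cast_ne_zero.mpr (exponent_ne_zero hadj)) (leadingCoeff_ne_zero.mpr hf.ne_zero)
  obtain ⟨C₁, h₁⟩ := exists_abs_sum_sub_sum_le
    (g := fun p ↦ (rootCount f p : ℝ) * Real.log p / p)
    (h := fun p ↦ (Nat.card {v : HeightOneSpectrum (𝓞 K) // absNorm v.asIdeal = p} : ℝ) *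
      Real.log p / p) hE fun p hp hpE ↦ by
    have : Fact p.Prime := ⟨hp⟩
    rw [card_absNorm_eq_rootCount_minpoly (θ := θ), hmin, rootCount_integralNormalization hdeg]
    · exact fun h ↦ hpE (h.mul_left _)
    · exact fun h ↦ hpE ((Int.natCast_dvd_natCast.mpr h).mul_right _)
  obtain ⟨C₂, h₂⟩ := exists_abs_sum_card_absNorm_eq_sub_log_le K
  exact ⟨C₁ + C₂, fun x hx ↦ (abs_sub_le _ _ _).trans (add_le_add (h₁ _) (h₂ x hx))⟩

lemma nu2_eq_rootCount (f : ℤ[X]) (n : ℕ) [NeZero n] : nu2 f n = rootCount (X * f) n := by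
  have hroot (a : ℕ) : aeval (a : ZMod n) (X * f) = 0 ↔ (n : ℤ) ∣ a * f.eval (a : ℤ) := by
    rw [← Int.cast_natCast a, ← eq_intCast (algebraMap ℤ (ZMod n)),
      aeval_algebraMap_apply_eq_algebraMap_eval, eq_intCast, ZMod.intCast_zmod_eq_zero_iff_dvd,
      eval_mul, eval_X]
  rw [nu2, rootCount, Nat.card_eq_fintype_card, Fintype.card_subtype]
  refine card_nbij' (fun a : ℕ ↦ (a : ZMod n)) ZMod.val (fun a ha ↦ ?_) (fun r hr ↦ ?_)
    (fun a ha ↦ ZMod.val_cast_of_lt (mem_range.mp (mem_filter.mp ha).1))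
    fun r _ ↦ ZMod.natCast_zmod_val r
  · exact mem_filter.mpr ⟨mem_univ _, (hroot a).mpr (mem_filter.mp ha).2⟩
  · refine mem_filter.mpr ⟨mem_range.mpr r.val_lt, (hroot _).mp ?_⟩
    rw [ZMod.natCast_zmod_val]
    exact (mem_filter.mp hr).2

lemma rootCount_X_mul {f : ℤ[X]} {p : ℕ} [Fact p.Prime] (hpf : ¬ (p : ℤ) ∣ f.coeff 0) :
    rootCount (X * f) p = rootCount X p + rootCount f p := by
  simp only [rootCount, map_mul, aeval_X, mul_eq_zero]
  rw [← Nat.card_sum]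
  refine Nat.card_congr (subtypeOrEquiv _ _ (Pi.disjoint_iff.mpr fun r ↦ ?_))
  rw [Prop.disjoint_iff]
  rintro ⟨rfl, hf⟩
  rw [← coeff_zero_eq_aeval_zero', eq_intCast, ZMod.intCast_zmod_eq_zero_iff_dvd] at hf
  exact hpf hf

end RootCount

theorem nu2_sum_asymptotic (f : Polynomial ℤ) (hirr : Irreducible f)
    (hdeg : 1 ≤ f.natDegree) (hconst : f.coeff 0 ≠ 0) :
    ∃ C : ℝ, ∀ x : ℝ, 2 ≤ x →
      |(∑ p ∈ (Finset.range (⌊x⌋₊ + 1)).filter Nat.Prime,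
          (nu2 f p : ℝ) * Real.log p / (p : ℝ)) - 2 * Real.log x| ≤ C := by
  obtain ⟨C₁, h₁⟩ := exists_abs_sum_rootCount_sub_log_le irreducible_X natDegree_X.ge
  obtain ⟨C₂, h₂⟩ := exists_abs_sum_rootCount_sub_log_le hirr hdeg
  obtain ⟨C₃, h₃⟩ := exists_abs_sum_sub_sum_le
    (g := fun p ↦ (nu2 f p : ℝ) * Real.log p / p)
    (h := fun p ↦ (rootCount X p : ℝ) * Real.log p / p + (rootCount f p : ℝ) * Real.log p / p)
    hconst fun p hp hpf ↦ by
      have : Fact p.Prime := ⟨hp⟩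
      rw [nu2_eq_rootCount, rootCount_X_mul hpf, Nat.cast_add, add_mul, add_div]
  refine ⟨C₃ + (C₁ + C₂), fun x hx ↦ (abs_sub_le _ _ _).trans (add_le_add (h₃ _) ?_)⟩
  have hx₁ : 1 ≤ x := one_le_two.trans hx
  rw [sum_add_distrib, two_mul, add_sub_add_comm]
  exact (abs_add_le _ _).trans (add_le_add (h₁ x hx₁) (h₂ x hx₁))
end
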